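/- arXiv:1507.04471 — 2 statements merged into one kernel-verified Lean document; each statement's English description precedes it below -/
import Mathlib

section
/- For every d ≥ 1 and every n ≥ d+1, there exists a d-hypertree T on [n] over F_2 with average filling-volume μ(T) ≥ c_d·C(n-1,d), where c_d = 16·48^{−3^{d−1}}. -/
open Finset symmDiff

/-- The vertex set `[n] = {1, …, n}`. -/
def rng (n : ℕ) : Finset ℕ := Finset.Icc 1 n

/-- The set of `d`-simplices (i.e. `(d+1)`-element subsets) on the vertex set `V`. -/
def simplices (V : Finset ℕ) (d : ℕ) : Finset (Finset ℕ) :=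
  V.powerset.filter fun σ => σ.card = d + 1

/-- The mod-2 boundary of a set `X` of simplices: the set of faces `τ` of codimension one
(`|τ| + 1 = |σ|`) contained in an odd number of members of `X`. -/
def bd (X : Finset (Finset ℕ)) : Finset (Finset ℕ) :=
  (X.biUnion fun σ => σ.powerset).filter
    fun τ => Odd (X.filter fun σ => τ ⊆ σ ∧ τ.card + 1 = σ.card).card

/-- A set of simplices is acyclic (a forest) over `F_2` if no nonempty subset has
empty boundary. -/
def IsAcyclic (F : Finset (Finset ℕ)) : Prop :=
  ∀ Y ⊆ F, Y ≠ ∅ → bd Y ≠ ∅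

/-- A `d`-hypertree on `V`: a maximal acyclic set of `d`-simplices on `V`. -/
def IsHypertreeOn (V : Finset ℕ) (d : ℕ) (T : Finset (Finset ℕ)) : Prop :=
  T ⊆ simplices V d ∧ IsAcyclic T ∧
    ∀ G, T ⊆ G → G ⊆ simplices V d → IsAcyclic G → G = T

/-- A simple cycle over `F_2`: a nonempty set with empty boundary, no nonempty proper
subset of which has empty boundary. -/
def IsSimpleCycle (Z : Finset (Finset ℕ)) : Prop :=
  Z ≠ ∅ ∧ bd Z = ∅ ∧ ∀ Y ⊂ Z, Y ≠ ∅ → bd Y ≠ ∅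

/-- Collapsibility: `X` can be reduced to `∅` by repeatedly removing a simplex `σ ∈ X`
containing a codimension-one face contained in no other current member of `X`. -/
inductive Collapsible : Finset (Finset ℕ) → Prop
  | empty : Collapsible ∅
  | step (X : Finset (Finset ℕ)) (σ τ : Finset ℕ) (hσ : σ ∈ X) (hτ : τ ⊆ σ)
      (hcard : τ.card + 1 = σ.card) (huniq : ∀ σ' ∈ X, τ ⊆ σ' → σ' = σ)
      (h : Collapsible (X.erase σ)) : Collapsible X

/-- The cone over `X` with apex `v`. -/
def cone (v : ℕ) (X : Finset (Finset ℕ)) : Finset (Finset ℕ) :=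
  X.image (insert v)

/-- The link of the vertex `v` in `X`. -/
def link (v : ℕ) (X : Finset (Finset ℕ)) : Finset (Finset ℕ) :=
  (X.filter fun σ => v ∈ σ).image fun σ => σ.erase v

/-- `fill Z T`: the subset `F ⊆ T` with `∂F = Z` (when it exists; it is unique when `T`
is a hypertree and `Z` a cycle). -/
noncomputable def fill (Z T : Finset (Finset ℕ)) : Finset (Finset ℕ) :=
  if h : ∃ F, F ⊆ T ∧ bd F = Z then h.choose else ∅

/-- The average filling-volume `μ(T)` of a `d`-hypertree `T` on `[n]`. -/
noncomputable def fillVolAvg (n d : ℕ) (T : Finset (Finset ℕ)) : ℝ :=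
  (∑ σ ∈ simplices (rng n) d, ((fill (bd {σ}) T).card : ℝ)) / (n.choose (d + 1) : ℝ)

open Classical in
/-- The cut of `τ` in `T`: the set of `d`-simplices `σ` on `[n]` such that
`T ⊕ {τ} ⊕ {σ}` is a `d`-hypertree on `[n]`. -/
noncomputable def cut (n d : ℕ) (τ : Finset ℕ) (T : Finset (Finset ℕ)) : Finset (Finset ℕ) :=
  (simplices (rng n) d).filter fun σ => IsHypertreeOn (rng n) d ((T ∆ {τ}) ∆ {σ})

/-!
A `k`-hypertree `F` and a `(k+1)`-hypertree `T` on `V \ {v}` combine to a `(k+1)`-hypertree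
`cone v F ∪ T` on `V`. It fills a cycle `Z` in two stages: the cone over the filling `G` of the link
of `v` uses up the simplices of `Z` at `v`, and `T` fills the residual cycle `deletion v Z ∆ G`.
Choose `v` uniformly at random, `F` from the random `k`-hypertree already constructed, and `T`
recursively. No simplex is then likely to be present, so the residual cycle keeps most vertices of
`Z`, which bounds the expected filling-volume of `Z` below by a multiple of the number of its
vertices. If `v` is a vertex of `Z`, then `G` is large in expectation and so is the vertex set of
the residual cycle, whatever `Z` is. Averaging over `v`, every nonzero cycle has expected
filling-volume at least `b * C(#V - 1, k + 1)` with `b = c² / 16`, where `c` is the constant in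
dimension `k`. The induction starts with a uniformly random Hamiltonian path and `c = 1 / 3`.
By linearity of expectation some hypertree has an average filling-volume at least that large.
-/

section SymmDiff

variable {α : Type*} [DecidableEq α]

theorem filter_symmDiff (p : α → Prop) [DecidablePred p]
    (s t : Finset α) : {a ∈ s ∆ t | p a} = {a ∈ s | p a} ∆ {a ∈ t | p a} := by
  ext a
  simp only [mem_filter, mem_symmDiff]
  tauto

theorem odd_card_symmDiff (s t : Finset α) :
    Odd #(s ∆ t) ↔ ¬(Odd #s ↔ Odd #t) := by
  have hst : #(s ∆ t) = #(s \ t) + #(t \ s) := card_union_of_disjoint disjoint_sdiff_sdiff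
  have hs := card_sdiff_add_card_inter s t
  have ht := card_sdiff_add_card_inter t s
  rw [inter_comm] at ht
  simp only [Nat.odd_iff]
  omega

theorem insert_eq_singleton_symmDiff {a : α} {s : Finset α}
    (ha : a ∉ s) : insert a s = {a} ∆ s := by
  rw [symmDiff_eq_union (disjoint_singleton_left.mpr ha), insert_eq]

theorem symmDiff_subset {s t u : Finset α} (hs : s ⊆ u) (ht : t ⊆ u) :
    s ∆ t ⊆ u :=
  symmDiff_subset_union.trans (union_subset hs ht)

end SymmDiff

/-- A chain over `F_2` on vertices in `ℕ`: a set of simplices, added by symmetric difference. -/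
abbrev Chain := Finset (Finset ℕ)

theorem mem_bd {X : Chain} {τ : Finset ℕ} :
    τ ∈ bd X ↔ Odd #{σ ∈ X | τ ⊆ σ ∧ #τ + 1 = #σ} := by
  rw [bd, mem_filter, and_iff_right_iff_imp]
  intro h
  obtain ⟨σ, hσ⟩ := card_pos.mp h.pos
  rw [mem_filter] at hσ
  exact mem_biUnion.mpr ⟨σ, hσ.1, mem_powerset.mpr hσ.2.1⟩

@[simp]
theorem bd_empty : bd ∅ = ∅ := by simp [bd]

theorem bd_symmDiff (X Y : Chain) : bd (X ∆ Y) = bd X ∆ bd Y := by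
  ext τ
  simp only [mem_symmDiff, mem_bd, filter_symmDiff, odd_card_symmDiff]
  tauto

theorem bd_singleton (σ : Finset ℕ) : bd {σ} = σ.image σ.erase := by
  ext τ
  by_cases h : τ ⊆ σ ∧ #τ + 1 = #σ
  · have : τ ∈ σ.image σ.erase := by
      obtain ⟨a, ha, rfl⟩ := covBy_iff_exists_erase.mp (covBy_iff_card_sdiff_eq_one.mpr
        ⟨h.1, by have := card_sdiff_add_card_eq_card h.1; omega⟩)
      exact mem_image_of_mem _ ha
    simp only [mem_bd, filter_singleton, if_pos h, card_singleton, odd_one, this]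
  · have : τ ∉ σ.image σ.erase := by
      rintro hτ
      obtain ⟨a, ha, rfl⟩ := mem_image.mp hτ
      exact h ⟨erase_subset _ _, card_erase_add_one ha⟩
    simp [mem_bd, filter_singleton, h, this]

section Cone

/-- The vertices of the simplices of a chain. -/
def vertices (X : Chain) : Finset ℕ := X.sup id

/-- The simplices of `Z` that avoid `v`, i.e. the chain obtained from `Z` by deleting the vertex
`v`. -/
def deletion (v : ℕ) (Z : Chain) : Chain := {σ ∈ Z | v ∉ σ}

variable {v u : ℕ} {σ : Finset ℕ} {X Y Z : Chain}

theorem mem_vertices : u ∈ vertices X ↔ ∃ σ ∈ X, u ∈ σ := by simp [vertices, mem_sup]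

theorem notMem_vertices : v ∉ vertices X ↔ ∀ σ ∈ X, v ∉ σ := by simp [mem_vertices]

theorem vertices_mono (h : X ⊆ Y) : vertices X ⊆ vertices Y := sup_mono h

theorem vertices_symmDiff_subset (X Y : Chain) : vertices (X ∆ Y) ⊆ vertices X ∪ vertices Y :=
  (vertices_mono symmDiff_subset_union).trans_eq sup_union

theorem vertices_bd_subset (X : Chain) : vertices (bd X) ⊆ vertices X := by
  intro u hu
  obtain ⟨τ, hτ, hu⟩ := mem_vertices.mp hu
  obtain ⟨σ, hσ, h⟩ := mem_biUnion.mp (mem_filter.mp hτ).1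
  exact mem_vertices.mpr ⟨σ, hσ, mem_powerset.mp h hu⟩

theorem notMem_vertices_deletion (v : ℕ) (Z : Chain) : v ∉ vertices (deletion v Z) :=
  notMem_vertices.mpr fun _ hσ => (mem_filter.mp hσ).2

theorem deletion_symmDiff (v : ℕ) (X Y : Chain) :
    deletion v (X ∆ Y) = deletion v X ∆ deletion v Y :=
  filter_symmDiff _ X Y

theorem mem_link : σ ∈ link v Z ↔ v ∉ σ ∧ insert v σ ∈ Z := by
  simp only [link, mem_image, mem_filter]
  constructor
  · rintro ⟨τ, ⟨hτ, hv⟩, rfl⟩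
    exact ⟨notMem_erase v τ, by rwa [insert_erase hv]⟩
  · rintro ⟨hv, h⟩
    exact ⟨insert v σ, ⟨h, mem_insert_self v σ⟩, erase_insert hv⟩

theorem notMem_vertices_link (v : ℕ) (Z : Chain) : v ∉ vertices (link v Z) :=
  notMem_vertices.mpr fun _ hσ => (mem_link.mp hσ).1

theorem link_nonempty : (link v Z).Nonempty ↔ v ∈ vertices Z := by
  simp [link, mem_vertices, Finset.Nonempty]

theorem link_eq_empty (h : v ∉ vertices Z) : link v Z = ∅ :=
  not_nonempty_iff_eq_empty.mp (link_nonempty.not.mpr h)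

theorem deletion_eq_self (h : v ∉ vertices Z) : deletion v Z = Z :=
  filter_true_of_mem (notMem_vertices.mp h)

theorem mem_cone (hX : v ∉ vertices X) : σ ∈ cone v X ↔ v ∈ σ ∧ σ.erase v ∈ X := by
  rw [notMem_vertices] at hX
  simp only [cone, mem_image]
  constructor
  · rintro ⟨τ, hτ, rfl⟩
    exact ⟨mem_insert_self v τ, by rwa [erase_insert (hX τ hτ)]⟩
  · rintro ⟨hv, h⟩
    exact ⟨σ.erase v, h, insert_erase hv⟩

theorem cone_symmDiff (hX : v ∉ vertices X) (hY : v ∉ vertices Y) :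
    cone v (X ∆ Y) = cone v X ∆ cone v Y := by
  have hXY : v ∉ vertices (X ∆ Y) :=
    notMem_mono (vertices_symmDiff_subset X Y) (by simp [hX, hY])
  ext σ
  simp only [mem_symmDiff, mem_cone hX, mem_cone hY, mem_cone hXY]
  tauto

theorem card_cone (hX : v ∉ vertices X) : #(cone v X) = #X := by
  rw [notMem_vertices] at hX
  refine card_image_of_injOn fun σ hσ τ hτ h => ?_
  rw [← erase_insert (hX σ hσ), ← erase_insert (hX τ hτ), h]

theorem disjoint_cone (v : ℕ) (X : Chain) (hY : v ∉ vertices Y) : Disjoint (cone v X) Y := by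
  rw [disjoint_left]
  intro σ hσ
  obtain ⟨τ, -, rfl⟩ := mem_image.mp hσ
  exact fun h => notMem_vertices.mp hY _ h (mem_insert_self v τ)

theorem symmDiff_cone_eq_empty (hX : v ∉ vertices X) (h : X ∆ cone v Y = ∅) :
    X = ∅ ∧ Y = ∅ := by
  rw [(disjoint_cone v Y hX).symm.symmDiff_eq_sup, sup_eq_union, union_eq_empty] at h
  exact ⟨h.1, image_eq_empty.mp h.2⟩

theorem deletion_symmDiff_cone_link (v : ℕ) (Z : Chain) :
    deletion v Z ∆ cone v (link v Z) = Z := by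
  ext σ
  by_cases hv : v ∈ σ <;>
    simp [mem_symmDiff, deletion, mem_cone (notMem_vertices_link v Z), mem_link, insert_erase, hv]

theorem bd_singleton_insert (hv : v ∉ σ) : bd {insert v σ} = {σ} ∆ cone v (bd {σ}) := by
  have hσ : σ ∉ cone v (σ.image σ.erase) := fun h => by
    obtain ⟨τ, -, rfl⟩ := mem_image.mp h
    exact hv (mem_insert_self v τ)
  rw [bd_singleton, bd_singleton, ← insert_eq_singleton_symmDiff hσ, image_insert,
    erase_insert hv, cone, image_image]
  refine congrArg _ (image_congr fun a ha => ?_)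
  exact erase_insert_of_ne fun h => hv (h ▸ ha)

theorem bd_cone (hX : v ∉ vertices X) : bd (cone v X) = X ∆ cone v (bd X) := by
  induction X using Finset.induction_on with
  | empty => simp [cone]
  | insert σ X hσ ih =>
    obtain ⟨hv, hX⟩ : v ∉ σ ∧ v ∉ vertices X := by
      simpa [notMem_vertices] using hX
    have hvσ : v ∉ vertices {σ} := by simpa [notMem_vertices] using hv
    rw [insert_eq_singleton_symmDiff hσ, cone_symmDiff hvσ hX, bd_symmDiff, bd_symmDiff,
      cone_symmDiff (notMem_mono (vertices_bd_subset _) hvσ)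
        (notMem_mono (vertices_bd_subset _) hX), ih hX, cone, image_singleton,
      bd_singleton_insert hv, symmDiff_symmDiff_symmDiff_comm]

theorem bd_bd_singleton (σ : Finset ℕ) : bd (bd {σ}) = ∅ := by
  induction σ using Finset.induction_on with
  | empty => simp [bd_singleton]
  | insert v σ hv ih =>
    have hvσ : v ∉ vertices {σ} := by simpa [notMem_vertices] using hv
    rw [bd_singleton_insert hv, bd_symmDiff, bd_cone (notMem_mono (vertices_bd_subset _) hvσ), ih]
    simp [cone]

theorem bd_bd (X : Chain) : bd (bd X) = ∅ := by
  induction X using Finset.induction_on with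
  | empty => simp
  | insert σ X hσ ih =>
    rw [insert_eq_singleton_symmDiff hσ, bd_symmDiff, bd_symmDiff, bd_bd_singleton, ih,
      symmDiff_self, bot_eq_empty]

end Cone

section Cycle

variable {k v : ℕ} {V : Finset ℕ} {X Z : Chain}

theorem simplices_eq_powersetCard (V : Finset ℕ) (d : ℕ) : simplices V d = V.powersetCard (d + 1) :=
  powersetCard_eq_filter.symm

theorem vertices_subset (hX : X ⊆ V.powersetCard k) : vertices X ⊆ V :=
  Finset.sup_le fun _ hσ => (mem_powersetCard.mp (hX hσ)).1

theorem notMem_vertices_of_subset (hX : X ⊆ (V.erase v).powersetCard k) : v ∉ vertices X :=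
  notMem_mono (vertices_subset hX) (notMem_erase v V)

theorem bd_subset (hX : X ⊆ V.powersetCard (k + 1)) : bd X ⊆ V.powersetCard k := by
  intro τ hτ
  obtain ⟨σ, hσ⟩ := card_pos.mp (mem_bd.mp hτ).pos
  obtain ⟨hσ, hτσ, hcard⟩ := mem_filter.mp hσ
  obtain ⟨hσV, hσk⟩ := mem_powersetCard.mp (hX hσ)
  exact mem_powersetCard.mpr ⟨hτσ.trans hσV, by lia⟩

theorem deletion_subset (hX : X ⊆ V.powersetCard k) :
    deletion v X ⊆ (V.erase v).powersetCard k := by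
  intro σ hσ
  obtain ⟨hσ, hv⟩ := mem_filter.mp hσ
  obtain ⟨hσV, hσk⟩ := mem_powersetCard.mp (hX hσ)
  exact mem_powersetCard.mpr ⟨subset_erase.mpr ⟨hσV, hv⟩, hσk⟩

theorem link_subset (hX : X ⊆ V.powersetCard (k + 1)) :
    link v X ⊆ (V.erase v).powersetCard k := by
  intro σ hσ
  obtain ⟨hv, hσ⟩ := mem_link.mp hσ
  obtain ⟨hσV, hσk⟩ := mem_powersetCard.mp (hX hσ)
  rw [card_insert_of_notMem hv, Nat.add_right_cancel_iff] at hσk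
  exact mem_powersetCard.mpr ⟨subset_erase.mpr ⟨(subset_insert v σ).trans hσV, hv⟩, hσk⟩

theorem cone_subset (hv : v ∈ V) (hX : X ⊆ (V.erase v).powersetCard k) :
    cone v X ⊆ V.powersetCard (k + 1) := by
  intro σ hσ
  obtain ⟨τ, hτ, rfl⟩ := mem_image.mp hσ
  obtain ⟨hτV, hτk⟩ := mem_powersetCard.mp (hX hτ)
  obtain ⟨hτV, hvτ⟩ := subset_erase.mp hτV
  exact mem_powersetCard.mpr ⟨insert_subset hv hτV, by rw [card_insert_of_notMem hvτ, hτk]⟩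

theorem bd_deletion (hZ : bd Z = ∅) : bd (deletion v Z) = link v Z := by
  have hlink := notMem_vertices_link v Z
  rw [← deletion_symmDiff_cone_link v Z, bd_symmDiff, bd_cone hlink, ← symmDiff_assoc] at hZ
  refine symmDiff_eq_empty.mp (symmDiff_cone_eq_empty (notMem_mono
    (vertices_symmDiff_subset _ _) ?_) hZ).1
  have hdel := notMem_mono (vertices_bd_subset _) (notMem_vertices_deletion v Z)
  simp [hdel, hlink]

theorem vertices_deletion (hZ : bd Z = ∅) : vertices (deletion v Z) = (vertices Z).erase v := by
  refine Subset.antisymm (subset_erase.mpr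
    ⟨vertices_mono (filter_subset _ _), notMem_vertices_deletion v Z⟩) fun u hu => ?_
  obtain ⟨huv, hu⟩ := mem_erase.mp hu
  obtain ⟨σ, hσ, huσ⟩ := mem_vertices.mp hu
  by_cases hv : v ∈ σ
  · refine vertices_bd_subset _ (mem_vertices.mpr ⟨σ.erase v, ?_, mem_erase.mpr ⟨huv, huσ⟩⟩)
    rw [bd_deletion hZ, mem_link, insert_erase hv]
    exact ⟨notMem_erase v σ, hσ⟩
  · exact mem_vertices.mpr ⟨σ, mem_filter.mpr ⟨hσ, hv⟩, huσ⟩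

/-- `Z` is a cycle on the vertex set `V` whose simplices have `k` elements, i.e. a
`(k - 1)`-dimensional cycle; these are the cycles filled by `k`-hypertrees. -/
structure IsCycleOn (V : Finset ℕ) (k : ℕ) (Z : Chain) : Prop where
  subset : Z ⊆ V.powersetCard k
  bd_eq : bd Z = ∅

theorem isCycleOn_bd (hX : X ⊆ V.powersetCard (k + 1)) : IsCycleOn V k (bd X) :=
  ⟨bd_subset hX, bd_bd X⟩

theorem IsCycleOn.card_vertices (hZ : IsCycleOn V (k + 1) Z) (hne : Z.Nonempty) :
    k + 2 ≤ #(vertices Z) := by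
  obtain ⟨σ, hσ⟩ := hne
  have hσk := (mem_powersetCard.mp (hZ.subset hσ)).2
  obtain ⟨u, hu⟩ : σ.Nonempty := card_pos.mp (by lia)
  have hlink : (link u Z).Nonempty := link_nonempty.mpr (mem_vertices.mpr ⟨σ, hσ, hu⟩)
  rw [← bd_deletion hZ.bd_eq] at hlink
  obtain ⟨τ, hτ⟩ : (deletion u Z).Nonempty := by
    rw [nonempty_iff_ne_empty] at hlink ⊢
    exact fun h => hlink (by rw [h, bd_empty])
  obtain ⟨hτ, huτ⟩ := mem_filter.mp hτ
  have hsub : insert u τ ⊆ vertices Z :=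
    insert_subset (mem_vertices.mpr ⟨σ, hσ, hu⟩) fun x hx => mem_vertices.mpr ⟨τ, hτ, hx⟩
  have := card_le_card hsub
  rwa [card_insert_of_notMem huτ, (mem_powersetCard.mp (hZ.subset hτ)).2] at this

theorem IsCycleOn.link (hZ : IsCycleOn V (k + 1) Z) : IsCycleOn (V.erase v) k (link v Z) :=
  ⟨link_subset hZ.subset, by rw [← bd_deletion hZ.bd_eq, bd_bd]⟩

end Cycle

section Fill

variable {k v : ℕ} {V : Finset ℕ} {X Y Z F T : Chain}

namespace IsAcyclic

theorem mono (hT : IsAcyclic T) (h : F ⊆ T) : IsAcyclic F := fun Y hY => hT Y (hY.trans h)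

theorem eq_empty (hT : IsAcyclic T) (hX : X ⊆ T) (h : bd X = ∅) : X = ∅ :=
  by_contra fun hne => hT X hX hne h

theorem bd_injOn (hT : IsAcyclic T) : Set.InjOn bd {X | X ⊆ T} := fun X hX Y hY h =>
  symmDiff_eq_empty.mp <| hT.eq_empty (symmDiff_subset hX hY) <| by
    rw [bd_symmDiff, h, symmDiff_self, bot_eq_empty]

theorem fill_bd (hT : IsAcyclic T) (hX : X ⊆ T) : fill (bd X) T = X := by
  have h : ∃ F, F ⊆ T ∧ bd F = bd X := ⟨X, hX, rfl⟩
  rw [fill, dif_pos h]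
  exact hT.bd_injOn h.choose_spec.1 hX h.choose_spec.2

theorem fill_empty (hT : IsAcyclic T) : fill ∅ T = ∅ := by
  simpa using hT.fill_bd (empty_subset T)

end IsAcyclic

namespace IsHypertreeOn

theorem subset_powersetCard (hT : IsHypertreeOn V k T) : T ⊆ V.powersetCard (k + 1) :=
  simplices_eq_powersetCard V k ▸ hT.1

theorem of_exists_bd_eq (hT : T ⊆ simplices V k) (hacyc : IsAcyclic T)
    (hfill : ∀ σ ∈ simplices V k, ∃ F ⊆ T, bd F = bd {σ}) : IsHypertreeOn V k T := by
  refine ⟨hT, hacyc, fun G hTG hG hacycG => (hTG.antisymm fun σ hσ => ?_).symm⟩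
  obtain ⟨F, hF, hbd⟩ := hfill σ (hG hσ)
  have hFσ : F = {σ} := hacycG.bd_injOn (hF.trans hTG) (singleton_subset_iff.mpr hσ) hbd
  exact hF (hFσ ▸ mem_singleton_self σ)

theorem exists_bd_eq_bd_singleton (hT : IsHypertreeOn V k T) {σ : Finset ℕ}
    (hσ : σ ∈ simplices V k) : ∃ F ⊆ T, bd F = bd {σ} := by
  by_cases hσT : σ ∈ T
  · exact ⟨{σ}, singleton_subset_iff.mpr hσT, rfl⟩
  have hdep : ¬IsAcyclic (insert σ T) := fun h =>
    hσT (hT.2.2 _ (subset_insert σ T) (insert_subset hσ hT.1) h ▸ mem_insert_self σ T)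
  simp only [IsAcyclic, not_forall, not_not] at hdep
  obtain ⟨Y, hY, hne, hbd⟩ := hdep
  have hσY : σ ∈ Y := by
    by_contra h
    exact hne (hT.2.1.eq_empty ((subset_insert_iff_of_notMem h).mp hY) hbd)
  refine ⟨Y.erase σ, subset_insert_iff.mp hY, Eq.symm (symmDiff_eq_empty.mp ?_)⟩
  rw [← bd_symmDiff, ← insert_eq_singleton_symmDiff (notMem_erase σ Y), insert_erase hσY, hbd]

theorem exists_bd_eq (hT : IsHypertreeOn V k T) (hX : X ⊆ V.powersetCard (k + 1)) :
    ∃ F ⊆ T, bd F = bd X := by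
  induction X using Finset.induction_on with
  | empty => exact ⟨∅, empty_subset T, rfl⟩
  | insert σ X hσ ih =>
    rw [insert_subset_iff] at hX
    obtain ⟨A, hA, hAσ⟩ :=
      hT.exists_bd_eq_bd_singleton (by rw [simplices_eq_powersetCard]; exact hX.1)
    obtain ⟨B, hB, hBX⟩ := ih hX.2
    exact ⟨A ∆ B, symmDiff_subset hA hB, by
      rw [insert_eq_singleton_symmDiff hσ, bd_symmDiff, bd_symmDiff, hAσ, hBX]⟩

theorem fill_spec (hT : IsHypertreeOn V k T) (hV : V.Nonempty) (hZ : IsCycleOn V k Z) :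
    fill Z T ⊆ T ∧ bd (fill Z T) = Z := by
  obtain ⟨v, hv⟩ := hV
  have hbd : bd (cone v (deletion v Z)) = Z := by
    rw [bd_cone (notMem_vertices_deletion v Z), bd_deletion hZ.bd_eq, deletion_symmDiff_cone_link]
  obtain ⟨F, hF, hFZ⟩ := hT.exists_bd_eq (cone_subset hv (deletion_subset (v := v) hZ.subset))
  rw [hbd] at hFZ
  rw [← hFZ, hT.2.1.fill_bd hF]
  exact ⟨hF, rfl⟩

theorem fill_nonempty (hT : IsHypertreeOn V k T) (hV : V.Nonempty) (hZ : IsCycleOn V k Z)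
    (hne : Z.Nonempty) : (fill Z T).Nonempty := by
  rw [nonempty_iff_ne_empty] at hne ⊢
  exact fun h => hne (by rw [← (hT.fill_spec hV hZ).2, h, bd_empty])

end IsHypertreeOn

/-- The cycle avoiding `v` that remains of a cycle `Z` once its link at `v` has been filled in the
hypertree `F`: adding to `Z` the boundary of the cone over that filling removes every simplex
containing `v`. -/
noncomputable def residualCycle (v : ℕ) (Z F : Chain) : Chain := deletion v Z ∆ fill (link v Z) F

theorem residualCycle_of_notMem (hF : IsAcyclic F) (hv : v ∉ vertices Z) :
    residualCycle v Z F = Z := by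
  rw [residualCycle, link_eq_empty hv, hF.fill_empty, deletion_eq_self hv]
  exact symmDiff_bot Z

namespace IsHypertreeOn

theorem isCycleOn_residualCycle (hF : IsHypertreeOn (V.erase v) k F) (hV : (V.erase v).Nonempty)
    (hZ : IsCycleOn V (k + 1) Z) : IsCycleOn (V.erase v) (k + 1) (residualCycle v Z F) := by
  obtain ⟨hsub, hbd⟩ := hF.fill_spec hV (hZ.link (v := v))
  refine ⟨symmDiff_subset (deletion_subset hZ.subset) (hsub.trans hF.subset_powersetCard), ?_⟩
  rw [residualCycle, bd_symmDiff, bd_deletion hZ.bd_eq, hbd, symmDiff_self, bot_eq_empty]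

theorem isAcyclic_cone_union (hF : IsHypertreeOn (V.erase v) k F)
    (hT : IsHypertreeOn (V.erase v) (k + 1) T) : IsAcyclic (cone v F ∪ T) := by
  have hvF := notMem_vertices_of_subset hF.subset_powersetCard
  have hvT := notMem_vertices.mp (notMem_vertices_of_subset hT.subset_powersetCard)
  intro Y hY hne hbd
  have hlink : link v Y ⊆ F := fun σ hσ => by
    obtain ⟨hv, hσ⟩ := mem_link.mp hσ
    obtain h | h := mem_union.mp (hY hσ)
    · simpa [mem_cone hvF, hv] using h
    · exact absurd (mem_insert_self v σ) (hvT _ h)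
  have hdel : deletion v Y ⊆ T := fun σ hσ => by
    obtain ⟨hσ, hv⟩ := mem_filter.mp hσ
    exact (mem_union.mp (hY hσ)).resolve_left fun h => hv ((mem_cone hvF).mp h).1
  have hlink₀ : link v Y = ∅ :=
    hF.2.1.eq_empty hlink (by rw [← bd_deletion hbd, bd_bd])
  have hdel₀ : deletion v Y = ∅ :=
    hT.2.1.eq_empty hdel (by rw [bd_deletion hbd, hlink₀])
  apply hne
  rw [← deletion_symmDiff_cone_link v Y, hlink₀, hdel₀]
  simp [cone]

theorem bd_cone_fill_union (hF : IsHypertreeOn (V.erase v) k F)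
    (hT : IsHypertreeOn (V.erase v) (k + 1) T) (hV : (V.erase v).Nonempty)
    (hZ : IsCycleOn V (k + 1) Z) :
    bd (cone v (fill (link v Z) F) ∪ fill (residualCycle v Z F) T) = Z := by
  obtain ⟨hA, hbdA⟩ := hF.fill_spec hV (hZ.link (v := v))
  obtain ⟨hB, hbdB⟩ := hT.fill_spec hV (hF.isCycleOn_residualCycle hV hZ)
  have hvA := notMem_vertices_of_subset (hA.trans hF.subset_powersetCard)
  have hvB := notMem_vertices_of_subset (hB.trans hT.subset_powersetCard)
  rw [← sup_eq_union, ← (disjoint_cone v _ hvB).symmDiff_eq_sup, bd_symmDiff, bd_cone hvA, hbdA,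
    hbdB, residualCycle, symmDiff_comm, symmDiff_assoc, symmDiff_symmDiff_cancel_left,
    deletion_symmDiff_cone_link]

theorem cone_union (hv : v ∈ V) (hV : (V.erase v).Nonempty) (hF : IsHypertreeOn (V.erase v) k F)
    (hT : IsHypertreeOn (V.erase v) (k + 1) T) : IsHypertreeOn V (k + 1) (cone v F ∪ T) := by
  refine of_exists_bd_eq ?_ (isAcyclic_cone_union hF hT) fun σ hσ => ?_
  · rw [simplices_eq_powersetCard]
    exact union_subset (cone_subset hv hF.subset_powersetCard)
      (hT.subset_powersetCard.trans (powersetCard_mono (erase_subset v V)))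
  · rw [simplices_eq_powersetCard] at hσ
    have hZ : IsCycleOn V (k + 1) (bd {σ}) := isCycleOn_bd (singleton_subset_iff.mpr hσ)
    exact ⟨_, union_subset_union (image_subset_image (hF.fill_spec hV hZ.link).1)
      (hT.fill_spec hV (hF.isCycleOn_residualCycle hV hZ)).1, bd_cone_fill_union hF hT hV hZ⟩

theorem card_fill_cone_union (hF : IsHypertreeOn (V.erase v) k F)
    (hT : IsHypertreeOn (V.erase v) (k + 1) T) (hV : (V.erase v).Nonempty)
    (hZ : IsCycleOn V (k + 1) Z) :
    #(fill Z (cone v F ∪ T)) = #(fill (link v Z) F) + #(fill (residualCycle v Z F) T) := by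
  obtain ⟨hA, -⟩ := hF.fill_spec hV (hZ.link (v := v))
  obtain ⟨hB, -⟩ := hT.fill_spec hV (hF.isCycleOn_residualCycle hV hZ)
  have hvA := notMem_vertices_of_subset (hA.trans hF.subset_powersetCard)
  have hvB := notMem_vertices_of_subset (hB.trans hT.subset_powersetCard)
  have hfill := (isAcyclic_cone_union hF hT).fill_bd
    (union_subset_union (image_subset_image hA) hB)
  rw [← cone, bd_cone_fill_union hF hT hV hZ] at hfill
  rw [hfill, card_union_of_disjoint (disjoint_cone v _ hvB), card_cone hvA]

end IsHypertreeOn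

end Fill

section Counting

variable {k v : ℕ} {V : Finset ℕ} {R : Chain}

-- A cycle whose deletion at `v` is empty is itself empty.
theorem deletion_bd_injOn (hR : IsAcyclic R) (v : ℕ) :
    Set.InjOn (fun X => deletion v (bd X)) {X | X ⊆ R} := by
  intro X hX Y hY h
  have hdel : deletion v (bd (X ∆ Y)) = ∅ := by
    rw [bd_symmDiff, deletion_symmDiff, symmDiff_eq_empty.mpr h]
  have hbd : bd (X ∆ Y) = ∅ := by
    rw [← deletion_symmDiff_cone_link v (bd (X ∆ Y)), ← bd_deletion (bd_bd _), hdel]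
    simp [cone]
  rw [bd_symmDiff, symmDiff_eq_empty] at hbd
  exact hR.bd_injOn hX hY hbd

theorem IsAcyclic.card_le_choose (hR : IsAcyclic R) (hv : v ∈ V)
    (hRV : R ⊆ V.powersetCard (k + 1)) : #R ≤ (#V - 1).choose k := by
  have hcard : #R.powerset ≤ #((V.erase v).powersetCard k).powerset :=
    card_le_card_of_injOn _
      (fun X hX => mem_coe.mpr <| mem_powerset.mpr <| deletion_subset <| bd_subset <|
        (mem_powerset.mp (mem_coe.mp hX)).trans hRV)
      fun X hX Y hY => deletion_bd_injOn hR v (mem_powerset.mp hX) (mem_powerset.mp hY)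
  rwa [card_powerset, card_powerset, card_powersetCard, card_erase_of_mem hv,
    Nat.pow_le_pow_iff_right one_lt_two] at hcard

theorem mul_choose_le_mul_choose {m n k : ℕ} (hk : k ≠ 0) (h : m ≤ n) :
    n * m.choose k ≤ m * n.choose k := by
  obtain ⟨j, rfl⟩ := Nat.exists_eq_succ_of_ne_zero hk
  obtain _ | m := m
  · simp
  obtain _ | n := n
  · simp at h
  refine Nat.le_of_mul_le_mul_right ?_ j.succ_pos
  calc (n + 1) * (m + 1).choose (j + 1) * (j + 1)
      = (m + 1) * (n + 1) * m.choose j := by rw [mul_assoc, ← Nat.add_one_mul_choose_eq]; ring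
    _ ≤ (m + 1) * (n + 1) * n.choose j := by gcongr; lia
    _ = (m + 1) * (n + 1).choose (j + 1) * (j + 1) := by
      rw [mul_assoc (m + 1) ((n + 1).choose _), ← Nat.add_one_mul_choose_eq]; ring

theorem IsAcyclic.mul_card_le_card_vertices_mul_choose (hR : IsAcyclic R) (hk : k ≠ 0)
    (hRV : R ⊆ V.powersetCard (k + 1)) :
    (#V - 1) * #R ≤ #(vertices R) * (#V - 1).choose k := by
  obtain rfl | ⟨σ, hσ⟩ := R.eq_empty_or_nonempty
  · simp
  have hσk : #σ = k + 1 := (mem_powersetCard.mp (hRV hσ)).2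
  obtain ⟨u, hu⟩ : σ.Nonempty := card_pos.mp (by lia)
  have hRvert : R ⊆ (vertices R).powersetCard (k + 1) := fun τ hτ =>
    mem_powersetCard.mpr ⟨fun x hx => mem_vertices.mpr ⟨τ, hτ, hx⟩,
      (mem_powersetCard.mp (hRV hτ)).2⟩
  have hVcard : #(vertices R) ≤ #V := card_le_card (vertices_subset hRV)
  calc (#V - 1) * #R
      ≤ (#V - 1) * (#(vertices R) - 1).choose k := by
        gcongr
        exact hR.card_le_choose (mem_vertices.mpr ⟨σ, hσ, hu⟩) hRvert
    _ ≤ (#(vertices R) - 1) * (#V - 1).choose k := mul_choose_le_mul_choose hk (by lia)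
    _ ≤ #(vertices R) * (#V - 1).choose k := by gcongr; lia

end Counting

section Law

variable {Ω Ω₁ Ω₂ ι : Type*}

/-- A law on `Ω`, encoded by its expectation functional on all real-valued functions. This sidesteps
measurability: the laws used here have finite support. -/
abbrev Law (Ω : Type*) := (Ω → ℝ) →ₗ[ℝ] ℝ

namespace Law

/-- `E` is the expectation functional of a probability law supported on `S`. -/
structure IsProbabilityOn (E : Law Ω) (S : Set Ω) : Prop where
  mono : ∀ φ ψ : Ω → ℝ, (∀ ω ∈ S, φ ω ≤ ψ ω) → E φ ≤ E ψ
  map_one : E 1 = 1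

/-- The point mass at `ω`. -/
def dirac (ω : Ω) : Law Ω := LinearMap.proj ω

/-- The law of `g x y` for independent `x` and `y` of laws `A` and `B`. -/
def map₂ (g : Ω₁ → Ω₂ → Ω) (A : Law Ω₁) (B : Law Ω₂) : Law Ω :=
  A ∘ₗ LinearMap.pi fun x => B ∘ₗ LinearMap.funLeft ℝ ℝ (g x)

/-- The law `E i` for a uniformly random index `i ∈ s`. -/
noncomputable def mixture (s : Finset ι) (E : ι → Law Ω) : Law Ω :=
  (#s : ℝ)⁻¹ • ∑ i ∈ s, E i

theorem map₂_apply (g : Ω₁ → Ω₂ → Ω) (A : Law Ω₁) (B : Law Ω₂) (φ : Ω → ℝ) :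
    map₂ g A B φ = A fun x => B fun y => φ (g x y) := rfl

theorem card_mul_mixture_apply {s : Finset ι} (hs : s.Nonempty) (E : ι → Law Ω) (φ : Ω → ℝ) :
    #s * mixture s E φ = ∑ i ∈ s, E i φ := by
  have : (#s : ℝ) ≠ 0 := by exact_mod_cast hs.card_ne_zero
  simp [mixture, LinearMap.sum_apply, this]

namespace IsProbabilityOn

variable {E : Law Ω} {S : Set Ω} {φ ψ : Ω → ℝ} {c d : ℝ}

theorem mul_le_mul (hE : E.IsProbabilityOn S) (h : ∀ ω ∈ S, c * φ ω ≤ d * ψ ω) :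
    c * E φ ≤ d * E ψ := by
  simpa using hE.mono (c • φ) (d • ψ) h

theorem congr (hE : E.IsProbabilityOn S) (h : ∀ ω ∈ S, φ ω = ψ ω) : E φ = E ψ :=
  (hE.mono _ _ fun ω hω => (h ω hω).le).antisymm (hE.mono _ _ fun ω hω => (h ω hω).ge)

theorem map_const (hE : E.IsProbabilityOn S) (c : ℝ) : E (fun _ => c) = c := by
  rw [show (fun _ : Ω => c) = c • 1 from funext fun _ => (mul_one c).symm, map_smul, hE.map_one,
    smul_eq_mul, mul_one]

theorem const_le (hE : E.IsProbabilityOn S) (h : ∀ ω ∈ S, c ≤ φ ω) : c ≤ E φ :=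
  (hE.map_const c).ge.trans (hE.mono _ _ h)

theorem le_const (hE : E.IsProbabilityOn S) (h : ∀ ω ∈ S, φ ω ≤ c) : E φ ≤ c :=
  (hE.mono _ _ h).trans (hE.map_const c).le

theorem exists_le_apply (hE : E.IsProbabilityOn S) (hS : S.Finite) (φ : Ω → ℝ) :
    ∃ ω ∈ S, E φ ≤ φ ω := by
  have hne : S.Nonempty := by
    by_contra! h
    have := hE.mono 1 0 (by simp [h])
    rw [hE.map_one, map_zero] at this
    exact absurd this (by norm_num)
  obtain ⟨ω, hω, hmax⟩ := S.exists_max_image φ hS hne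
  exact ⟨ω, hω, hE.le_const hmax⟩

theorem dirac {ω : Ω} (hω : ω ∈ S) : (dirac ω).IsProbabilityOn S :=
  ⟨fun _ _ h => h ω hω, rfl⟩

theorem map₂ {A : Law Ω₁} {B : Law Ω₂} {S₁ : Set Ω₁} {S₂ : Set Ω₂} {g : Ω₁ → Ω₂ → Ω}
    (hA : A.IsProbabilityOn S₁) (hB : B.IsProbabilityOn S₂)
    (hg : ∀ x ∈ S₁, ∀ y ∈ S₂, g x y ∈ S) : (map₂ g A B).IsProbabilityOn S where
  mono φ ψ h := hA.mono _ _ fun x hx => hB.mono _ _ fun y hy => h _ (hg x hx y hy)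
  map_one := by
    rw [map₂_apply]
    exact (congrArg A (funext fun _ => hB.map_one)).trans hA.map_one

theorem mixture {s : Finset ι} (hs : s.Nonempty) {E : ι → Law Ω}
    (hE : ∀ i ∈ s, (E i).IsProbabilityOn S) : (mixture s E).IsProbabilityOn S := by
  have hpos : (0 : ℝ) < #s := by exact_mod_cast hs.card_pos
  refine ⟨fun φ ψ h => le_of_mul_le_mul_left ?_ hpos, mul_left_cancel₀ hpos.ne' ?_⟩
  · simp only [card_mul_mixture_apply hs]
    exact sum_le_sum fun i hi => (hE i hi).mono φ ψ h
  · rw [card_mul_mixture_apply hs, sum_congr rfl fun i hi => (hE i hi).map_one]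
    simp

end IsProbabilityOn

end Law

end Law

section RandomHypertree

variable {k v : ℕ} {V x : Finset ℕ} {Z F : Chain} {A B E : Law Chain} {p : ℝ}

/-- The filling-volume `|Fill(Z, T)|`, as a random variable in `T`. -/
noncomputable def fillVol (Z T : Chain) : ℝ := #(fill Z T)

/-- The indicator that the simplex `x` belongs to `T`, as a random variable in `T`. -/
def memIndicator (x : Finset ℕ) (T : Chain) : ℝ := if x ∈ T then 1 else 0

/-- `E` is the law of a random `k`-hypertree on `V`. -/
abbrev IsHypertreeLaw (V : Finset ℕ) (k : ℕ) (E : Law Chain) : Prop :=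
  E.IsProbabilityOn {T | IsHypertreeOn V k T}

/-- The law of `cone v F ∪ T` for independent `F` and `T` of laws `A` and `B`. -/
def coneLaw (v : ℕ) (A B : Law Chain) : Law Chain := Law.map₂ (fun F T => cone v F ∪ T) A B

namespace IsHypertreeLaw

theorem fillVol_nonneg (hE : IsHypertreeLaw V k E) (Z : Chain) : 0 ≤ E (fillVol Z) :=
  hE.const_le fun _ _ => Nat.cast_nonneg _

theorem one_le_fillVol (hE : IsHypertreeLaw V k E) (hV : V.Nonempty) (hZ : IsCycleOn V k Z)
    (hne : Z.Nonempty) : 1 ≤ E (fillVol Z) :=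
  hE.const_le fun _ hT => Nat.one_le_cast.mpr
    (IsHypertreeOn.fill_nonempty hT hV hZ hne).card_pos

theorem memIndicator_nonpos (hE : IsHypertreeLaw V k E) (hx : x ∉ V.powersetCard (k + 1)) :
    E (memIndicator x) ≤ 0 :=
  hE.le_const fun _ hT =>
    (if_neg fun h => hx (IsHypertreeOn.subset_powersetCard hT h)).le

end IsHypertreeLaw

theorem isHypertreeLaw_coneLaw (hv : v ∈ V) (hV : (V.erase v).Nonempty)
    (hA : IsHypertreeLaw (V.erase v) k A) (hB : IsHypertreeLaw (V.erase v) (k + 1) B) :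
    IsHypertreeLaw V (k + 1) (coneLaw v A B) :=
  hA.map₂ hB fun _ hF _ hT => IsHypertreeOn.cone_union hv hV hF hT

theorem coneLaw_fillVol (hV : (V.erase v).Nonempty) (hA : IsHypertreeLaw (V.erase v) k A)
    (hB : IsHypertreeLaw (V.erase v) (k + 1) B) (hZ : IsCycleOn V (k + 1) Z) :
    coneLaw v A B (fillVol Z) =
      A (fillVol (link v Z)) + A fun F => B (fillVol (residualCycle v Z F)) := by
  rw [coneLaw, Law.map₂_apply, ← map_add]
  refine hA.congr fun F hF => ?_
  rw [Pi.add_apply, ← hB.map_const (fillVol (link v Z) F), ← map_add]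
  refine hB.congr fun T hT => ?_
  simp only [fillVol, Pi.add_apply, IsHypertreeOn.card_fill_cone_union hF hT hV hZ, Nat.cast_add]

theorem coneLaw_memIndicator_of_mem (hA : IsHypertreeLaw (V.erase v) k A)
    (hB : IsHypertreeLaw (V.erase v) (k + 1) B) (hx : v ∈ x) :
    coneLaw v A B (memIndicator x) = A (memIndicator (x.erase v)) := by
  refine hA.congr fun F hF => (hB.congr fun T hT => ?_).trans (hB.map_const _)
  have hvF := notMem_vertices_of_subset (IsHypertreeOn.subset_powersetCard hF)
  have hvT := notMem_vertices_of_subset (IsHypertreeOn.subset_powersetCard hT)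
  have hxT : x ∉ T := fun h => notMem_vertices.mp hvT x h hx
  simp [memIndicator, mem_cone hvF, hx, hxT]

theorem coneLaw_memIndicator_of_notMem (hA : IsHypertreeLaw (V.erase v) k A)
    (hB : IsHypertreeLaw (V.erase v) (k + 1) B) (hx : v ∉ x) :
    coneLaw v A B (memIndicator x) = B (memIndicator x) := by
  refine (hA.congr fun F hF => hB.congr fun T _ => ?_).trans (hA.map_const _)
  have hvF := notMem_vertices_of_subset (IsHypertreeOn.subset_powersetCard hF)
  simp [memIndicator, mem_cone hvF, hx]

-- A vertex `u ≠ v` of `Z` survives in the residual cycle unless the filling of the link meets a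
-- fixed simplex of `Z` at `u`; vertices of the filling outside `Z` cannot be cancelled at all.
theorem IsHypertreeOn.card_add_sum_le_card_vertices_residualCycle (hV : (V.erase v).Nonempty)
    (hF : IsHypertreeOn (V.erase v) k F) (hZ : IsCycleOn V (k + 1) Z) {σ : ℕ → Finset ℕ}
    (hσ : ∀ u ∈ (vertices Z).erase v, σ u ∈ deletion v Z ∧ u ∈ σ u) :
    (#(vertices (fill (link v Z) F) \ (vertices Z).erase v) : ℝ) +
        ∑ u ∈ (vertices Z).erase v, (1 - memIndicator (σ u) F) ≤
      #(vertices (residualCycle v Z F)) := by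
  set G := fill (link v Z) F
  set U := (vertices Z).erase v with hU
  have hGF : G ⊆ F := (hF.fill_spec hV hZ.link).1
  have hfresh : vertices G \ U ⊆ vertices (residualCycle v Z F) := fun u hu => by
    obtain ⟨huG, huU⟩ := mem_sdiff.mp hu
    obtain ⟨τ, hτ, huτ⟩ := mem_vertices.mp huG
    rw [hU, ← vertices_deletion hZ.bd_eq] at huU
    exact mem_vertices.mpr
      ⟨τ, mem_symmDiff.mpr (.inr ⟨hτ, fun h => notMem_vertices.mp huU τ h huτ⟩), huτ⟩
  have hkept : {u ∈ U | σ u ∉ F} ⊆ vertices (residualCycle v Z F) := fun u hu => by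
    obtain ⟨huU, hu⟩ := mem_filter.mp hu
    exact mem_vertices.mpr
      ⟨σ u, mem_symmDiff.mpr (.inl ⟨(hσ u huU).1, fun h => hu (hGF h)⟩), (hσ u huU).2⟩
  have hdisj : Disjoint (vertices G \ U) {u ∈ U | σ u ∉ F} :=
    disjoint_sdiff_self_left.mono_right (filter_subset _ U)
  have hsum : ∑ u ∈ U, (1 - memIndicator (σ u) F) = #{u ∈ U | σ u ∉ F} := by
    rw [card_filter, Nat.cast_sum]
    refine sum_congr rfl fun u _ => ?_
    by_cases h : σ u ∈ F <;> simp [memIndicator, h]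
  rw [hsum, ← Nat.cast_add, ← card_union_of_disjoint hdisj]
  exact_mod_cast card_le_card (union_subset hfresh hkept)

namespace IsHypertreeLaw

theorem card_vertices_residualCycle (hV : (V.erase v).Nonempty)
    (hA : IsHypertreeLaw (V.erase v) k A) (hp : ∀ x, A (memIndicator x) ≤ p)
    (hZ : IsCycleOn V (k + 1) Z) :
    (A fun F => (#(vertices (fill (link v Z) F) \ (vertices Z).erase v) : ℝ)) +
        #((vertices Z).erase v) * (1 - p) ≤
      A fun F => (#(vertices (residualCycle v Z F)) : ℝ) := by
  have hex : ∀ u ∈ (vertices Z).erase v, ∃ σ ∈ deletion v Z, u ∈ σ := fun u hu =>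
    mem_vertices.mp (by rwa [vertices_deletion hZ.bd_eq])
  choose! σ hσ using hex
  calc _ ≤ (A fun F => (#(vertices (fill (link v Z) F) \ (vertices Z).erase v) : ℝ)) +
        ∑ u ∈ (vertices Z).erase v, A (1 - memIndicator (σ u)) := by
        rw [← nsmul_eq_mul]
        gcongr
        refine card_nsmul_le_sum _ _ _ fun u _ => ?_
        rw [map_sub, hA.map_one]
        linarith [hp (σ u)]
    _ ≤ _ := by
        rw [← map_sum, ← map_add]
        refine hA.mono _ _ fun F hF => ?_
        rw [Pi.add_apply, Finset.sum_apply]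
        exact IsHypertreeOn.card_add_sum_le_card_vertices_residualCycle hV hF hZ hσ

theorem card_erase_mul_le_card_vertices_residualCycle (hV : (V.erase v).Nonempty)
    (hA : IsHypertreeLaw (V.erase v) k A) (hp : ∀ x, A (memIndicator x) ≤ p)
    (hZ : IsCycleOn V (k + 1) Z) :
    #((vertices Z).erase v) * (1 - p) ≤ A fun F => (#(vertices (residualCycle v Z F)) : ℝ) := by
  refine le_trans ?_ (hA.card_vertices_residualCycle hV hp hZ)
  exact le_add_of_nonneg_left (hA.const_le fun _ _ => Nat.cast_nonneg _)

theorem half_card_vertices_fill_le (hV : (V.erase v).Nonempty)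
    (hA : IsHypertreeLaw (V.erase v) k A) (hp : ∀ x, A (memIndicator x) ≤ 1 / 2)
    (hZ : IsCycleOn V (k + 1) Z) :
    (A fun F => (#(vertices (fill (link v Z) F)) : ℝ)) / 2 ≤
      A fun F => (#(vertices (residualCycle v Z F)) : ℝ) := by
  set U := (vertices Z).erase v
  have hres := hA.card_vertices_residualCycle hV hp hZ
  have hfresh : 0 ≤ A fun F => (#(vertices (fill (link v Z) F) \ U) : ℝ) :=
    hA.const_le fun _ _ => Nat.cast_nonneg _
  have hfill : (A fun F => (#(vertices (fill (link v Z) F)) : ℝ)) ≤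
      (A fun F => (#(vertices (fill (link v Z) F) \ U) : ℝ)) + #U := by
    rw [← hA.map_const (#U : ℝ), ← map_add]
    refine hA.mono _ _ fun F _ => ?_
    rw [Pi.add_apply]
    exact_mod_cast tsub_le_iff_right.mp (le_card_sdiff U _)
  linarith

end IsHypertreeLaw

end RandomHypertree

section Step

variable {k n v : ℕ} {V x : Finset ℕ} {Z : Chain} {A B E : Law Chain} {a b c : ℝ}

/-- `E` is the law of a random `k`-hypertree on `V` that contains each simplex with probability at
most `(k + 1) / #V`, the value for the uniform law on all `k`-hypertrees, and in which every nonzero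
cycle has expected filling-volume at least `c * C(#V - 1, k)`. -/
structure IsSpreadFillingLaw (V : Finset ℕ) (k : ℕ) (c : ℝ) (E : Law Chain) : Prop where
  isHypertreeLaw : IsHypertreeLaw V k E
  card_mul_memIndicator_le : ∀ x, #V * E (memIndicator x) ≤ k + 1
  le_fillVol : ∀ Z, IsCycleOn V k Z → Z.Nonempty → c * (#V - 1).choose k ≤ E (fillVol Z)

/-- In a random hypertree of law `E` a cycle visiting a proportion `t` of the vertices has expected
filling-volume at least `a * t * C(#V - 1, k)`. -/
def FillsLinearly (V : Finset ℕ) (k : ℕ) (a : ℝ) (E : Law Chain) : Prop :=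
  ∀ Z, IsCycleOn V k Z → a * #(vertices Z) * (#V - 1).choose k ≤ #V * E (fillVol Z)

theorem sum_card_erase (hx : x ⊆ V) : ∑ v ∈ V, (#(x.erase v) : ℝ) = (#V - 1) * #x := by
  have h : ∀ v ∈ V, (#(x.erase v) : ℝ) = #x - if v ∈ x then 1 else 0 := fun v _ => by
    split_ifs with hv
    · rw [← card_erase_add_one hv, Nat.cast_add, Nat.cast_one, add_sub_cancel_right]
    · rw [erase_eq_of_notMem hv, sub_zero]
  rw [sum_congr rfl h, sum_sub_distrib, sum_ite_mem, inter_eq_right.mpr hx]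
  simp only [sum_const, nsmul_eq_mul, mul_one]
  ring

theorem sum_le_card_of_mul_le_card_erase (hx : x ⊆ V) (hV : 1 < #V) {e : ℕ → ℝ}
    (he : ∀ v ∈ V, (#V - 1) * e v ≤ #(x.erase v)) : ∑ v ∈ V, e v ≤ #x := by
  have hpos : (0 : ℝ) < #V - 1 := by
    rw [sub_pos]
    exact_mod_cast hV
  refine le_of_mul_le_mul_left ?_ hpos
  rw [mul_sum, ← sum_card_erase hx]
  exact sum_le_sum he

theorem FillsLinearly.mul_card_vertices_residualCycle_le (hV : (V.erase v).Nonempty)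
    (hn : #(V.erase v) = n) (hA : IsHypertreeLaw (V.erase v) k A)
    (hB : FillsLinearly (V.erase v) (k + 1) a B) (hZ : IsCycleOn V (k + 1) Z) :
    a * (n - 1).choose (k + 1) * (A fun F => (#(vertices (residualCycle v Z F)) : ℝ)) ≤
      n * A fun F => B (fillVol (residualCycle v Z F)) := by
  refine hA.mul_le_mul fun F hF => ?_
  have := hB _ (IsHypertreeOn.isCycleOn_residualCycle hF hV hZ)
  rw [hn] at this
  linarith

theorem IsSpreadFillingLaw.mul_le_card_vertices_fill (hk : k ≠ 0) (hv : v ∈ vertices Z)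
    (hn : #(V.erase v) = n) (hkn : k + 1 ≤ n) (hA : IsSpreadFillingLaw (V.erase v) k c A)
    (hZ : IsCycleOn V (k + 1) Z) :
    c * (n - 1) ≤ A fun F => (#(vertices (fill (link v Z) F)) : ℝ) := by
  have hW : (V.erase v).Nonempty := card_pos.mp (by lia)
  have hchoose : (0 : ℝ) < (n - 1).choose k := by exact_mod_cast Nat.choose_pos (by lia)
  have hcard : ((n - 1 : ℕ) : ℝ) * A (fillVol (link v Z)) ≤
      (n - 1).choose k * A fun F => (#(vertices (fill (link v Z) F)) : ℝ) :=
    hA.isHypertreeLaw.mul_le_mul fun F hF => by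
      obtain ⟨hsub, -⟩ := IsHypertreeOn.fill_spec hF hW (hZ.link (v := v))
      have := IsAcyclic.mul_card_le_card_vertices_mul_choose (hF.2.1.mono hsub) hk
        (hsub.trans (IsHypertreeOn.subset_powersetCard hF))
      rw [hn] at this
      rw [fillVol, mul_comm (((n - 1).choose k : ℕ) : ℝ)]
      exact_mod_cast this
  have hfill := hA.le_fillVol _ (hZ.link (v := v)) (link_nonempty.mpr hv)
  rw [hn] at hfill
  rw [Nat.cast_sub (by lia), Nat.cast_one] at hcard
  refine le_of_mul_le_mul_left ?_ hchoose
  have hn1 : (0 : ℝ) ≤ n - 1 := sub_nonneg.mpr (by exact_mod_cast (by lia : 1 ≤ n))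
  calc (n - 1).choose k * (c * (n - 1)) = (n - 1) * (c * (n - 1).choose k) := by ring
    _ ≤ (n - 1) * A (fillVol (link v Z)) := by gcongr
    _ ≤ _ := hcard

theorem IsSpreadFillingLaw.memIndicator_le (hn : #V = n) (hn0 : n ≠ 0)
    (hE : IsSpreadFillingLaw V k c E) (x : Finset ℕ) : E (memIndicator x) ≤ (k + 1) / n := by
  rw [le_div_iff₀' (by positivity), ← hn]
  exact hE.card_mul_memIndicator_le x

theorem le_coneLaw_fillVol_of_linear (hn : #(V.erase v) = n) (hn0 : n ≠ 0) (ha : 0 ≤ a)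
    (hA : IsSpreadFillingLaw (V.erase v) k c A) (hB : IsHypertreeLaw (V.erase v) (k + 1) B)
    (hL : FillsLinearly (V.erase v) (k + 1) a B) (hZ : IsCycleOn V (k + 1) Z) :
    (if v ∈ vertices Z then c * (n - 1).choose k else 0) +
        a * (n - 1).choose (k + 1) / n * (1 - (k + 1) / n) * #((vertices Z).erase v) ≤
      coneLaw v A B (fillVol Z) := by
  have hW : (V.erase v).Nonempty := card_pos.mp (by lia)
  rw [coneLaw_fillVol hW hA.isHypertreeLaw hB hZ]
  refine add_le_add ?_ ?_
  · split_ifs with hv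
    · exact hn ▸ hA.le_fillVol _ hZ.link (link_nonempty.mpr hv)
    · exact hA.isHypertreeLaw.fillVol_nonneg _
  · have hn' : (0 : ℝ) < n := by positivity
    rw [div_mul_eq_mul_div, div_mul_eq_mul_div, div_le_iff₀' hn']
    refine le_trans ?_ (hL.mul_card_vertices_residualCycle_le hW hn hA.isHypertreeLaw hZ)
    rw [mul_assoc, mul_comm (1 - _)]
    gcongr
    exact hA.isHypertreeLaw.card_erase_mul_le_card_vertices_residualCycle hW
      (hA.memIndicator_le hn hn0) hZ

theorem le_coneLaw_fillVol_of_mem (hk : k ≠ 0) (hv : v ∈ vertices Z) (hn : #(V.erase v) = n)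
    (hkn : 2 * (k + 1) ≤ n) (hc : 0 ≤ c) (hA : IsSpreadFillingLaw (V.erase v) k c A)
    (hB : IsHypertreeLaw (V.erase v) (k + 1) B)
    (hL : FillsLinearly (V.erase v) (k + 1) (c / 2) B) (hZ : IsCycleOn V (k + 1) Z) :
    c * (n - 1).choose k + c ^ 2 / 8 * (n - 1).choose (k + 1) ≤ coneLaw v A B (fillVol Z) := by
  have hW : (V.erase v).Nonempty := card_pos.mp (by lia)
  have hn2 : (2 : ℝ) ≤ n := by exact_mod_cast (by lia : 2 ≤ n)
  have hhalf : ∀ x, A (memIndicator x) ≤ 1 / 2 := fun x => by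
    refine (hA.memIndicator_le hn (by lia) x).trans ?_
    rw [div_le_div_iff₀ (by positivity) two_pos]
    have : (2 * (k + 1) : ℝ) ≤ n := by exact_mod_cast hkn
    linarith
  rw [coneLaw_fillVol hW hA.isHypertreeLaw hB hZ]
  refine add_le_add (hn ▸ hA.le_fillVol _ hZ.link (link_nonempty.mpr hv)) ?_
  refine le_of_mul_le_mul_left ?_ (by positivity : (0 : ℝ) < n)
  have hvert : c * n / 4 ≤ A fun F => (#(vertices (residualCycle v Z F)) : ℝ) := by
    have hfill := hA.mul_le_card_vertices_fill hk hv hn (by lia) hZ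
    have hres := hA.isHypertreeLaw.half_card_vertices_fill_le hW hhalf hZ
    nlinarith
  calc (n : ℝ) * (c ^ 2 / 8 * (n - 1).choose (k + 1))
      = c / 2 * (n - 1).choose (k + 1) * (c * n / 4) := by ring
    _ ≤ c / 2 * (n - 1).choose (k + 1) *
        A fun F => (#(vertices (residualCycle v Z F)) : ℝ) := by gcongr
    _ ≤ _ := hL.mul_card_vertices_residualCycle_le hW hn hA.isHypertreeLaw hZ

theorem le_coneLaw_fillVol_of_notMem (hv : v ∉ vertices Z) (hn : #(V.erase v) = n) (hn0 : n ≠ 0)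
    (hA : IsHypertreeLaw (V.erase v) k A) (hB : IsSpreadFillingLaw (V.erase v) (k + 1) b B)
    (hZ : IsCycleOn V (k + 1) Z) (hne : Z.Nonempty) :
    b * (n - 1).choose (k + 1) ≤ coneLaw v A B (fillVol Z) := by
  have hW : (V.erase v).Nonempty := card_pos.mp (by lia)
  rw [coneLaw_fillVol hW hA hB.isHypertreeLaw hZ]
  refine le_add_of_nonneg_of_le (hA.fillVol_nonneg _) (hA.const_le fun F hF => ?_)
  have hres := IsHypertreeOn.isCycleOn_residualCycle hF hW hZ
  rw [residualCycle_of_notMem hF.2.1 hv] at hres ⊢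
  exact hn ▸ hB.le_fillVol Z hres hne

end Step

section ConeMixture

variable {k n : ℕ} {V x : Finset ℕ} {Z : Chain} {A B : ℕ → Law Chain} {a b c : ℝ}

/-- The law of `cone v F ∪ T`, where `v ∈ V` is uniformly random and, given `v`, the hypertrees `F`
and `T` are independent of laws `A v` and `B v`. -/
noncomputable def coneMixture (V : Finset ℕ) (A B : ℕ → Law Chain) : Law Chain :=
  Law.mixture V fun v => coneLaw v (A v) (B v)

theorem isHypertreeLaw_coneMixture (hV : 1 < #V)
    (hA : ∀ v ∈ V, IsHypertreeLaw (V.erase v) k (A v))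
    (hB : ∀ v ∈ V, IsHypertreeLaw (V.erase v) (k + 1) (B v)) :
    IsHypertreeLaw V (k + 1) (coneMixture V A B) :=
  .mixture (card_pos.mp (by lia)) fun v hv =>
    isHypertreeLaw_coneLaw hv (card_pos.mp (by rw [card_erase_of_mem hv]; lia)) (hA v hv) (hB v hv)

theorem card_mul_coneMixture_memIndicator_le (hV : 1 < #V)
    (hA : ∀ v ∈ V, IsSpreadFillingLaw (V.erase v) k a (A v))
    (hB : ∀ v ∈ V, IsSpreadFillingLaw (V.erase v) (k + 1) b (B v))
    (hx : x ∈ V.powersetCard (k + 2)) :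
    #V * coneMixture V A B (memIndicator x) ≤ k + 2 := by
  obtain ⟨hxV, hxk⟩ := mem_powersetCard.mp hx
  rw [coneMixture, Law.card_mul_mixture_apply (card_pos.mp (by lia))]
  refine (sum_le_card_of_mul_le_card_erase hxV hV fun v hv => ?_).trans_eq (by simp [hxk])
  rw [← cast_card_erase_of_mem hv]
  by_cases hvx : v ∈ x
  · rw [coneLaw_memIndicator_of_mem (hA v hv).isHypertreeLaw (hB v hv).isHypertreeLaw hvx,
      card_erase_of_mem hvx, hxk]
    exact_mod_cast (hA v hv).card_mul_memIndicator_le _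
  · rw [coneLaw_memIndicator_of_notMem (hA v hv).isHypertreeLaw (hB v hv).isHypertreeLaw hvx,
      erase_eq_of_notMem hvx, hxk]
    exact_mod_cast (hB v hv).card_mul_memIndicator_le x

theorem succ_mul_choose_succ_eq_sub_mul_choose (hkn : k + 1 ≤ n) :
    ((k + 1) * (n - 1).choose (k + 1) : ℝ) = (n - (k + 1)) * (n - 1).choose k := by
  have h := Nat.choose_succ_right_eq (n - 1) k
  rw [Nat.sub_sub, add_comm 1 k] at h
  have h' := congrArg (Nat.cast : ℕ → ℝ) h
  push_cast [Nat.cast_sub hkn] at h'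
  linarith

theorem choose_succ_eq_add (hn : n ≠ 0) :
    (n.choose (k + 1) : ℝ) = (n - 1).choose k + (n - 1).choose (k + 1) := by
  obtain ⟨m, rfl⟩ := Nat.exists_eq_succ_of_ne_zero hn
  exact_mod_cast Nat.choose_succ_succ m k

theorem fillsLinearly_coneMixture (hV : #V = n + 1) (hkn : k + 1 ≤ n) (hc : 0 ≤ c)
    (hA : ∀ v ∈ V, IsSpreadFillingLaw (V.erase v) k c (A v))
    (hB : ∀ v ∈ V, IsHypertreeLaw (V.erase v) (k + 1) (B v))
    (hL : ∀ v ∈ V, FillsLinearly (V.erase v) (k + 1) (c / 2) (B v)) :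
    FillsLinearly V (k + 1) (c / 2) (coneMixture V A B) := by
  intro Z hZ
  have hZV := vertices_subset hZ.subset
  have hn : (0 : ℝ) < n := by exact_mod_cast (by lia : 0 < n)
  have hpascal := succ_mul_choose_succ_eq_sub_mul_choose hkn
  rw [coneMixture, Law.card_mul_mixture_apply (card_pos.mp (by lia)), hV, Nat.add_sub_cancel,
    choose_succ_eq_add (by lia)]
  set C₁ : ℝ := ((n - 1).choose k : ℝ)
  set C₂ : ℝ := ((n - 1).choose (k + 1) : ℝ)
  have hC : (k + 1) / n * C₂ ≤ C₁ := by
    rw [div_mul_eq_mul_div, div_le_iff₀ hn, hpascal, mul_comm C₁]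
    gcongr
    linarith [(k.cast_nonneg : (0 : ℝ) ≤ k)]
  calc c / 2 * #(vertices Z) * (C₁ + C₂)
      ≤ c / 2 * #(vertices Z) * (2 * C₁ + (1 - (k + 1) / n) * C₂) :=
        mul_le_mul_of_nonneg_left (by linarith) (by positivity)
    _ = ∑ v ∈ V, ((if v ∈ vertices Z then c * C₁ else 0) +
          c / 2 * C₂ / n * (1 - (k + 1) / n) * #((vertices Z).erase v)) := by
        rw [sum_add_distrib, sum_ite_mem, inter_eq_right.mpr hZV, sum_const, nsmul_eq_mul,
          ← mul_sum, sum_card_erase hZV, hV]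
        push_cast
        field_simp
        ring
    _ ≤ _ := sum_le_sum fun v hv => by
        have hnv : #(V.erase v) = n := by rw [card_erase_of_mem hv, hV, Nat.add_sub_cancel]
        exact le_coneLaw_fillVol_of_linear hnv (by lia) (by positivity) (hA v hv) (hB v hv)
          (hL v hv) hZ

theorem le_coneMixture_fillVol (hk : k ≠ 0) (hV : #V = n + 1) (hkn : 2 * (k + 1) ≤ n)
    (hb : 0 ≤ b) (hbc : b ≤ c ^ 2 / 16) (hc : 0 ≤ c) (hc1 : c ≤ 1)
    (hA : ∀ v ∈ V, IsSpreadFillingLaw (V.erase v) k c (A v))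
    (hB : ∀ v ∈ V, IsSpreadFillingLaw (V.erase v) (k + 1) b (B v))
    (hL : ∀ v ∈ V, FillsLinearly (V.erase v) (k + 1) (c / 2) (B v))
    (hZ : IsCycleOn V (k + 1) Z) (hne : Z.Nonempty) :
    b * n.choose (k + 1) ≤ coneMixture V A B (fillVol Z) := by
  have hvert : (k + 2 : ℝ) ≤ #(vertices Z) := by exact_mod_cast hZ.card_vertices hne
  have hpascal := succ_mul_choose_succ_eq_sub_mul_choose (by lia : k + 1 ≤ n)
  have hVpos : (0 : ℝ) < #V := by exact_mod_cast (by lia : 0 < #V)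
  refine le_of_mul_le_mul_left ?_ hVpos
  rw [coneMixture, Law.card_mul_mixture_apply (card_pos.mp (by lia)), hV,
    choose_succ_eq_add (by lia)]
  set C₁ : ℝ := ((n - 1).choose k : ℝ)
  set C₂ : ℝ := ((n - 1).choose (k + 1) : ℝ)
  have hbc' : b ≤ c := by nlinarith
  calc ((n + 1 : ℕ) : ℝ) * (b * (C₁ + C₂))
      = (k + 2) * (b * (C₁ + C₂)) + (n + 1) * b * C₂ - b * C₂ := by
        push_cast
        linear_combination b * -hpascal
    _ ≤ #(vertices Z) * (c * C₁ + b * C₂) + (n + 1) * b * C₂ := by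
        have : 0 ≤ b * C₂ := by positivity
        have : (k + 2) * (b * (C₁ + C₂)) ≤ #(vertices Z) * (c * C₁ + b * C₂) := by
          rw [mul_add b]
          gcongr
        linarith
    _ = ∑ v ∈ V, ((if v ∈ vertices Z then c * C₁ + b * C₂ else 0) + b * C₂) := by
        rw [sum_add_distrib, sum_ite_mem, inter_eq_right.mpr (vertices_subset hZ.subset), sum_const,
          sum_const, nsmul_eq_mul, nsmul_eq_mul, hV]
        push_cast
        ring
    _ ≤ _ := sum_le_sum fun v hv => by
        have hnv : #(V.erase v) = n := by rw [card_erase_of_mem hv, hV, Nat.add_sub_cancel]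
        split_ifs with hvZ
        · refine le_trans ?_ (le_coneLaw_fillVol_of_mem hk hvZ hnv hkn hc (hA v hv)
            (hB v hv).isHypertreeLaw (hL v hv) hZ)
          have : b * C₂ ≤ c ^ 2 / 16 * C₂ := by gcongr
          linarith
        · rw [zero_add]
          exact le_coneLaw_fillVol_of_notMem hvZ hnv (by lia) (hA v hv).isHypertreeLaw
            (hB v hv) hZ hne

end ConeMixture

section Induction

variable {k : ℕ} {V : Finset ℕ} {b c : ℝ}

theorem isHypertreeOn_empty (hV : #V ≤ k) : IsHypertreeOn V k ∅ := by
  have h : simplices V k = ∅ := by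
    rw [simplices_eq_powersetCard, powersetCard_eq_empty]
    lia
  refine .of_exists_bd_eq (empty_subset _) (fun Y hY hne => absurd (subset_empty.mp hY) hne) ?_
  simp [h]

theorem isSpreadFillingLaw_dirac_empty (hV : #V ≤ k) (hk : k ≠ 0) (c : ℝ) :
    IsSpreadFillingLaw V k c (Law.dirac ∅) where
  isHypertreeLaw := .dirac (isHypertreeOn_empty hV)
  card_mul_memIndicator_le x := by
    have : Law.dirac ∅ (memIndicator x) = 0 := by simp [Law.dirac, memIndicator]
    rw [this, mul_zero]
    positivity
  le_fillVol Z _ _ := by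
    rw [Nat.choose_eq_zero_of_lt (by lia), Nat.cast_zero, mul_zero]
    exact Nat.cast_nonneg _

theorem fillsLinearly_dirac_empty (hV : #V ≤ k) (hk : k ≠ 0) (a : ℝ) :
    FillsLinearly V k a (Law.dirac ∅) := fun Z _ => by
  rw [Nat.choose_eq_zero_of_lt (by lia), Nat.cast_zero, mul_zero]
  exact mul_nonneg (Nat.cast_nonneg _) (Nat.cast_nonneg _)

theorem isSpreadFillingLaw_coneMixture {A B : ℕ → Law Chain} (hk : k ≠ 0) (hV : k + 2 ≤ #V)
    (hb : 0 ≤ b) (hbc : b ≤ c ^ 2 / 16) (hbk : b * 2 ^ (2 * k + 1) ≤ 1) (hc : 0 ≤ c) (hc1 : c ≤ 1)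
    (hA : ∀ v ∈ V, IsSpreadFillingLaw (V.erase v) k c (A v))
    (hB : ∀ v ∈ V, IsSpreadFillingLaw (V.erase v) (k + 1) b (B v))
    (hL : ∀ v ∈ V, FillsLinearly (V.erase v) (k + 1) (c / 2) (B v)) :
    IsSpreadFillingLaw V (k + 1) b (coneMixture V A B) := by
  have hlaw : IsHypertreeLaw V (k + 1) (coneMixture V A B) :=
    isHypertreeLaw_coneMixture (by lia) (fun v hv => (hA v hv).isHypertreeLaw)
      fun v hv => (hB v hv).isHypertreeLaw
  refine ⟨hlaw, fun x => ?_, fun Z hZ hne => ?_⟩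
  · push_cast
    rw [add_assoc, one_add_one_eq_two]
    by_cases hx : x ∈ V.powersetCard (k + 2)
    · exact card_mul_coneMixture_memIndicator_le (by lia) hA hB hx
    · exact (mul_nonpos_of_nonneg_of_nonpos (Nat.cast_nonneg _)
        (hlaw.memIndicator_nonpos hx)).trans (by positivity)
  · obtain hlt | hle := lt_or_ge (#V - 1) (2 * (k + 1))
    · calc b * (#V - 1).choose (k + 1) ≤ b * 2 ^ (2 * k + 1) := by
            gcongr
            exact_mod_cast (Nat.choose_le_two_pow _ _).trans (Nat.pow_le_pow_right two_pos (by lia))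
        _ ≤ 1 := hbk
        _ ≤ _ := hlaw.one_le_fillVol (card_pos.mp (by lia)) hZ hne
    · exact le_coneMixture_fillVol hk (by lia) hle hb hbc hc hc1 hA hB hL hZ hne

theorem exists_isSpreadFillingLaw_succ (hk : k ≠ 0) (hb : 0 ≤ b) (hbc : b ≤ c ^ 2 / 16)
    (hbk : b * 2 ^ (2 * k + 1) ≤ 1) (hc : 0 ≤ c) (hc1 : c ≤ 1)
    (hA : ∀ V, ∃ A, IsSpreadFillingLaw V k c A) (V : Finset ℕ) :
    ∃ E, IsSpreadFillingLaw V (k + 1) b E ∧ FillsLinearly V (k + 1) (c / 2) E := by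
  induction V using Finset.strongInduction with
  | H V ih =>
    obtain hV | hV := le_or_gt #V (k + 1)
    · exact ⟨_, isSpreadFillingLaw_dirac_empty hV k.succ_ne_zero b,
        fillsLinearly_dirac_empty hV k.succ_ne_zero _⟩
    · choose A hA using fun v => hA (V.erase v)
      choose! B hB using fun v hv => ih (V.erase v) (erase_ssubset hv)
      exact ⟨coneMixture V A B,
        isSpreadFillingLaw_coneMixture hk hV hb hbc hbk hc hc1 (fun v _ => hA v)
          (fun v hv => (hB v hv).1) (fun v hv => (hB v hv).2),
        fillsLinearly_coneMixture (n := #V - 1) (by lia) (by lia) hc (fun v _ => hA v)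
          (fun v hv => (hB v hv).1.isHypertreeLaw) (fun v hv => (hB v hv).2)⟩

end Induction

section Path

variable {v w : ℕ} {W x : Finset ℕ} {X Z : Chain} {B : ℕ → Law Chain}

/-- `E` has the properties needed of the law of a uniformly random Hamiltonian path on `W` starting
at `w`, regarded as a random `1`-hypertree. The cycles to be filled are sets of points. -/
structure IsRootedPathLaw (W : Finset ℕ) (w : ℕ) (E : Law Chain) : Prop where
  isHypertreeLaw : IsHypertreeLaw W 1 E
  mul_memIndicator_le : ∀ x ∈ W.powersetCard 2, (#W - 1) * E (memIndicator x) ≤ #(x.erase w)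
  le_fillVol_of_mem : ∀ Z, IsCycleOn W 1 Z → w ∈ vertices Z → (#W : ℝ) / 2 ≤ E (fillVol Z)
  le_fillVol_of_notMem : ∀ Z, IsCycleOn W 1 Z → w ∉ vertices Z →
    (#(vertices Z) * #W / (2 * (#(vertices Z) + 1)) : ℝ) ≤ E (fillVol Z)

theorem sum_ite_mem_of_subset {S : Finset ℕ} (hS : S ⊆ W) (a b : ℝ) :
    ∑ v ∈ W, (if v ∈ S then a else b) = #S * a + (#W - #S) * b := by
  rw [sum_ite, filter_mem_eq_inter, filter_notMem_eq_sdiff, inter_eq_right.mpr hS, sum_const,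
    sum_const, nsmul_eq_mul, nsmul_eq_mul, cast_card_sdiff hS]

theorem le_sum_fillVol_of_isRootedPathLaw (hB : ∀ v ∈ W, IsRootedPathLaw W v (B v))
    (hZ : IsCycleOn W 1 Z) :
    (#(vertices Z) * #W * (#W + 1) / (2 * (#(vertices Z) + 1)) : ℝ) ≤
      ∑ v ∈ W, B v (fillVol Z) := by
  set r := #(vertices Z)
  calc (r * #W * (#W + 1) / (2 * (r + 1)) : ℝ)
      = ∑ v ∈ W, if v ∈ vertices Z then (#W / 2 : ℝ) else r * #W / (2 * (r + 1)) := by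
        rw [sum_ite_mem_of_subset (vertices_subset hZ.subset)]
        field_simp
        ring
    _ ≤ _ := sum_le_sum fun v hv => by
        split_ifs with hvZ
        · exact (hB v hv).le_fillVol_of_mem Z hZ hvZ
        · exact (hB v hv).le_fillVol_of_notMem Z hZ hvZ

theorem bd_point (v : ℕ) : bd {{v}} = {∅} := by simp [bd_singleton]

theorem isHypertreeOn_point (hv : v ∈ W) : IsHypertreeOn W 0 {{v}} := by
  refine .of_exists_bd_eq ?_ (fun Y hY hne => ?_) fun σ hσ => ⟨_, Subset.rfl, ?_⟩
  · simp [simplices_eq_powersetCard, hv]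
  · rw [(subset_singleton_iff.mp hY).resolve_left hne, bd_point]
    exact singleton_ne_empty ∅
  · rw [simplices_eq_powersetCard, mem_powersetCard, zero_add, card_eq_one] at hσ
    obtain ⟨-, u, rfl⟩ := hσ
    rw [bd_point, bd_point]

theorem mem_vertices_iff_singleton_mem (hX : X ⊆ W.powersetCard 1) :
    v ∈ vertices X ↔ {v} ∈ X := by
  refine mem_vertices.trans ⟨?_, fun h => ⟨_, h, mem_singleton_self v⟩⟩
  rintro ⟨σ, hσ, hv⟩
  obtain ⟨u, rfl⟩ := card_eq_one.mp (mem_powersetCard.mp (hX hσ)).2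
  rwa [mem_singleton.mp hv]

theorem vertices_residualCycle_point (hv : v ∈ W.erase w) (hZ : IsCycleOn W 1 Z)
    (hw : w ∈ vertices Z) :
    vertices (residualCycle w Z {{v}}) = (vertices Z).erase w ∆ {v} := by
  have hpt := isHypertreeOn_point hv
  have hfill : fill (link w Z) {{v}} = {{v}} :=
    (hpt.fill_nonempty ⟨v, hv⟩ hZ.link (link_nonempty.mpr hw)).subset_singleton_iff.mp
      (hpt.fill_spec ⟨v, hv⟩ hZ.link).1
  ext u
  rw [mem_vertices_iff_singleton_mem (hpt.isCycleOn_residualCycle ⟨v, hv⟩ hZ).subset,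
    residualCycle, hfill, ← vertices_deletion hZ.bd_eq, mem_symmDiff, mem_symmDiff,
    mem_vertices_iff_singleton_mem (deletion_subset (v := w) hZ.subset)]
  simp

/-- The law of the path that starts at `w`, steps to a uniformly random vertex `v` of the rest of
`W`, and continues from `v` along a path of law `B v`. -/
noncomputable def pathExtension (W : Finset ℕ) (w : ℕ) (B : ℕ → Law Chain) : Law Chain :=
  Law.mixture (W.erase w) fun v => coneLaw w (Law.dirac {{v}}) (B v)

theorem isHypertreeLaw_dirac_point (hv : v ∈ W) : IsHypertreeLaw W 0 (Law.dirac {{v}}) :=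
  .dirac (isHypertreeOn_point hv)

theorem pathExtension_memIndicator_le (hne : (W.erase w).Nonempty)
    (hB : ∀ v ∈ W.erase w, IsRootedPathLaw (W.erase w) v (B v)) (hx : x ∈ W.powersetCard 2) :
    #(W.erase w) * pathExtension W w B (memIndicator x) ≤ #(x.erase w) := by
  obtain ⟨hxW, hx2⟩ := mem_powersetCard.mp hx
  rw [pathExtension, Law.card_mul_mixture_apply hne]
  by_cases hwx : w ∈ x
  · rw [sum_congr rfl fun v hv =>
      coneLaw_memIndicator_of_mem (isHypertreeLaw_dirac_point hv) (hB v hv).isHypertreeLaw hwx]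
    have hxw : #(x.erase w) = 1 := by rw [card_erase_of_mem hwx, hx2]
    obtain ⟨u, hu⟩ := card_eq_one.mp hxw
    have hsum : ∑ v ∈ W.erase w, Law.dirac {{v}} (memIndicator {u}) =
        ∑ v ∈ W.erase w, if u = v then (1 : ℝ) else 0 :=
      sum_congr rfl fun v _ => by simp [Law.dirac, memIndicator]
    rw [hu, hsum, sum_ite_eq, card_singleton]
    split_ifs <;> norm_num
  · rw [sum_congr rfl fun v hv =>
      coneLaw_memIndicator_of_notMem (isHypertreeLaw_dirac_point hv) (hB v hv).isHypertreeLaw hwx]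
    have hxW' : x ⊆ W.erase w := subset_erase.mpr ⟨hxW, hwx⟩
    have hcard := card_le_card hxW'
    rw [erase_eq_of_notMem hwx]
    exact sum_le_card_of_mul_le_card_erase hxW' (by lia) fun v hv =>
      (hB v hv).mul_memIndicator_le x (mem_powersetCard.mpr ⟨hxW', hx2⟩)

theorem le_coneLaw_point_fillVol {E : Law Chain} (hv : v ∈ W.erase w)
    (hE : IsRootedPathLaw (W.erase w) v E) (hZ : IsCycleOn W 1 Z) (hw : w ∈ vertices Z) :
    (if v ∈ (vertices Z).erase w then
        1 + (#((vertices Z).erase w) - 1) * #(W.erase w) / (2 * #((vertices Z).erase w))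
      else 1 + #(W.erase w) / 2 : ℝ) ≤ coneLaw w (Law.dirac {{v}}) E (fillVol Z) := by
  have hpt := isHypertreeLaw_dirac_point hv
  have hcyc := (isHypertreeOn_point hv).isCycleOn_residualCycle ⟨v, hv⟩ hZ
  have hres := vertices_residualCycle_point hv hZ hw
  have hlink := hpt.one_le_fillVol ⟨v, hv⟩ hZ.link (link_nonempty.mpr hw)
  rw [coneLaw_fillVol ⟨v, hv⟩ hpt hE.isHypertreeLaw hZ]
  set U := (vertices Z).erase w
  split_ifs with hvU
  · have hresU : vertices (residualCycle w Z {{v}}) = U.erase v := by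
      rw [hres, symmDiff_of_ge (singleton_subset_iff.mpr hvU), sdiff_singleton_eq_erase]
    have hfill := hE.le_fillVol_of_notMem _ hcyc (hresU ▸ notMem_erase v U)
    rw [hresU, cast_card_erase_of_mem hvU, sub_add_cancel] at hfill
    exact add_le_add hlink hfill
  · have hvres : v ∈ vertices (residualCycle w Z {{v}}) := by simp [hres, mem_symmDiff, hvU]
    exact add_le_add hlink (hE.le_fillVol_of_mem _ hcyc hvres)

theorem le_pathExtension_fillVol_of_mem (hne : (W.erase w).Nonempty)
    (hB : ∀ v ∈ W.erase w, IsRootedPathLaw (W.erase w) v (B v)) (hZ : IsCycleOn W 1 Z)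
    (hw : w ∈ vertices Z) :
    ((#(W.erase w) + 1) / 2 : ℝ) ≤ pathExtension W w B (fillVol Z) := by
  have hN : (0 : ℝ) < #(W.erase w) := by exact_mod_cast hne.card_pos
  have hU : (#((vertices Z).erase w) : ℝ) ≠ 0 := by
    obtain ⟨σ, hσ, -⟩ := mem_vertices.mp hw
    have := hZ.card_vertices ⟨σ, hσ⟩
    rw [Nat.cast_ne_zero, card_erase_of_mem hw]
    lia
  refine le_of_mul_le_mul_left ?_ hN
  rw [pathExtension, Law.card_mul_mixture_apply hne]
  refine le_trans (le_of_eq ?_) (sum_le_sum fun v hv => le_coneLaw_point_fillVol hv (hB v hv) hZ hw)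
  rw [sum_ite_mem_of_subset (erase_subset_erase w (vertices_subset hZ.subset))]
  field_simp
  ring

theorem le_pathExtension_fillVol_of_notMem (hne : (W.erase w).Nonempty)
    (hB : ∀ v ∈ W.erase w, IsRootedPathLaw (W.erase w) v (B v)) (hZ : IsCycleOn W 1 Z)
    (hw : w ∉ vertices Z) :
    (#(vertices Z) * (#(W.erase w) + 1) / (2 * (#(vertices Z) + 1)) : ℝ) ≤
      pathExtension W w B (fillVol Z) := by
  have hN : (0 : ℝ) < #(W.erase w) := by exact_mod_cast hne.card_pos
  refine le_of_mul_le_mul_left ?_ hN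
  rw [pathExtension, Law.card_mul_mixture_apply hne]
  have hres v (hv : v ∈ W.erase w) : residualCycle w Z {{v}} = Z :=
    residualCycle_of_notMem (isHypertreeOn_point hv).2.1 hw
  obtain ⟨u, hu⟩ := hne
  have hZ' : IsCycleOn (W.erase w) 1 Z :=
    hres u hu ▸ (isHypertreeOn_point hu).isCycleOn_residualCycle ⟨u, hu⟩ hZ
  calc _ = (#(vertices Z) * #(W.erase w) * (#(W.erase w) + 1) / (2 * (#(vertices Z) + 1)) : ℝ) := by
        ring
    _ ≤ ∑ v ∈ W.erase w, B v (fillVol Z) := le_sum_fillVol_of_isRootedPathLaw hB hZ'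
    _ ≤ _ := sum_le_sum fun v hv => by
        have hpt := isHypertreeLaw_dirac_point hv
        rw [coneLaw_fillVol ⟨v, hv⟩ hpt (hB v hv).isHypertreeLaw hZ]
        refine le_add_of_nonneg_of_le (hpt.fillVol_nonneg _) (le_of_eq ?_)
        change _ = B v (fillVol (residualCycle w Z {{v}}))
        rw [hres v hv]

theorem isRootedPathLaw_pathExtension (hw : w ∈ W) (hne : (W.erase w).Nonempty)
    (hB : ∀ v ∈ W.erase w, IsRootedPathLaw (W.erase w) v (B v)) :
    IsRootedPathLaw W w (pathExtension W w B) := by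
  have hcard : (#(W.erase w) : ℝ) = #W - 1 := cast_card_erase_of_mem hw
  refine ⟨.mixture hne fun v hv => ?_, fun x hx => ?_, fun Z hZ hwZ => ?_, fun Z hZ hwZ => ?_⟩
  · exact isHypertreeLaw_coneLaw hw hne (isHypertreeLaw_dirac_point hv) (hB v hv).isHypertreeLaw
  · simpa only [hcard] using pathExtension_memIndicator_le hne hB hx
  · simpa only [hcard, sub_add_cancel] using le_pathExtension_fillVol_of_mem hne hB hZ hwZ
  · simpa only [hcard, sub_add_cancel] using le_pathExtension_fillVol_of_notMem hne hB hZ hwZ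

theorem isRootedPathLaw_dirac_empty (hW : #W ≤ 1) : IsRootedPathLaw W w (Law.dirac ∅) := by
  have hZ0 {Z : Chain} (hZ : IsCycleOn W 1 Z) : Z = ∅ := by
    by_contra! hne
    have := hZ.card_vertices hne
    have := card_le_card (vertices_subset hZ.subset)
    lia
  refine ⟨.dirac (isHypertreeOn_empty hW), fun x hx => ?_, fun Z hZ hw => ?_, fun Z hZ _ => ?_⟩
  · have := card_le_card (mem_powersetCard.mp hx).1
    have := (mem_powersetCard.mp hx).2
    lia
  · simp [hZ0 hZ, vertices] at hw
  · simp [hZ0 hZ, vertices, Law.dirac, fillVol]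

theorem exists_isRootedPathLaw (W : Finset ℕ) :
    ∀ w ∈ W, ∃ E, IsRootedPathLaw W w E := by
  induction W using Finset.strongInduction with
  | H W ih =>
    intro w hw
    obtain hW | hne := (W.erase w).eq_empty_or_nonempty
    · refine ⟨_, isRootedPathLaw_dirac_empty ?_⟩
      rw [← card_erase_add_one hw, hW, card_empty]
    · choose! B hB using ih (W.erase w) (erase_ssubset hw)
      exact ⟨_, isRootedPathLaw_pathExtension hw hne hB⟩

theorem exists_isSpreadFillingLaw_one (V : Finset ℕ) :
    ∃ E, IsSpreadFillingLaw V 1 (1 / 3) E := by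
  obtain hV | hV := le_or_gt #V 1
  · exact ⟨_, isSpreadFillingLaw_dirac_empty hV one_ne_zero _⟩
  have hne : V.Nonempty := card_pos.mp (by lia)
  have hpos : (0 : ℝ) < #V := by exact_mod_cast hne.card_pos
  choose! B hB using exists_isRootedPathLaw V
  have hlaw : IsHypertreeLaw V 1 (Law.mixture V B) :=
    .mixture hne fun v hv => (hB v hv).isHypertreeLaw
  refine ⟨_, hlaw, fun x => ?_, fun Z hZ hZne => le_of_mul_le_mul_left ?_ hpos⟩
  · by_cases hx : x ∈ V.powersetCard 2
    · obtain ⟨hxV, hx2⟩ := mem_powersetCard.mp hx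
      rw [Law.card_mul_mixture_apply hne]
      refine (sum_le_card_of_mul_le_card_erase hxV hV fun v hv =>
        (hB v hv).mul_memIndicator_le x hx).trans_eq ?_
      rw [hx2]
      norm_num
    · exact (mul_nonpos_of_nonneg_of_nonpos hpos.le (hlaw.memIndicator_nonpos hx)).trans
        (by norm_num)
  · rw [Law.card_mul_mixture_apply hne]
    refine le_trans ?_ (le_sum_fillVol_of_isRootedPathLaw hB hZ)
    have hr : (2 : ℝ) ≤ #(vertices Z) := by exact_mod_cast hZ.card_vertices hZne
    rw [Nat.choose_one_right, Nat.cast_pred hne.card_pos, le_div_iff₀ (by positivity)]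
    nlinarith [mul_nonneg hpos.le (sub_nonneg.mpr hr),
      mul_nonneg (mul_nonneg hpos.le hpos.le) (sub_nonneg.mpr hr)]

end Path

section ExpectationMethod

theorem sixteen_mul_pow_mul_inv_le_one (d : ℕ) :
    16 * (48 ^ 2 ^ (d + 1) : ℝ)⁻¹ * 2 ^ (2 * (d + 1) + 1) ≤ 1 := by
  have hexp : d + 2 ≤ 2 ^ (d + 1) := Nat.lt_two_pow_self
  rw [mul_right_comm, ← div_eq_mul_inv, div_le_one (by positivity)]
  calc (16 * 2 ^ (2 * (d + 1) + 1) : ℝ) = 4 ^ d * 128 := by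
        rw [show 2 * (d + 1) + 1 = 2 * d + 3 by lia, pow_add, pow_mul]
        ring
    _ ≤ 48 ^ d * 48 ^ 2 := by gcongr <;> norm_num
    _ = 48 ^ (d + 2) := (pow_add _ _ _).symm
    _ ≤ 48 ^ 2 ^ (d + 1) := pow_le_pow_right₀ (by norm_num) hexp

theorem exists_isSpreadFillingLaw (d : ℕ) (V : Finset ℕ) :
    ∃ E, IsSpreadFillingLaw V (d + 1) (16 * (48 ^ 2 ^ d : ℝ)⁻¹) E := by
  induction d generalizing V with
  | zero =>
    rw [pow_zero, pow_one, show (16 * 48⁻¹ : ℝ) = 1 / 3 by norm_num]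
    exact exists_isSpreadFillingLaw_one V
  | succ d ih =>
    have hsq : 16 * (48 ^ 2 ^ (d + 1) : ℝ)⁻¹ = (16 * (48 ^ 2 ^ d : ℝ)⁻¹) ^ 2 / 16 := by
      rw [pow_succ 2 d, pow_mul]
      field_simp
    have hone : 16 * (48 ^ 2 ^ d : ℝ)⁻¹ ≤ 1 := by
      rw [← div_eq_mul_inv, div_le_one (by positivity)]
      exact (by norm_num : (16 : ℝ) ≤ 48).trans
        (le_self_pow₀ (by norm_num) (Nat.two_pow_pos d).ne')
    obtain ⟨E, hE, -⟩ := exists_isSpreadFillingLaw_succ d.succ_ne_zero (by positivity) hsq.le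
      (sixteen_mul_pow_mul_inv_le_one d) (by positivity) hone ih V
    exact ⟨E, hE⟩

theorem finite_setOf_isHypertreeOn (V : Finset ℕ) (k : ℕ) : {T | IsHypertreeOn V k T}.Finite :=
  (simplices V k).powerset.finite_toSet.subset fun _ hT => mem_coe.mpr (mem_powerset.mpr hT.1)

theorem IsSpreadFillingLaw.exists_mul_choose_le_fillVolAvg {n k : ℕ} {c : ℝ} {E : Law Chain}
    (hE : IsSpreadFillingLaw (rng n) k c E) (hn : k + 1 ≤ n) :
    ∃ T, IsHypertreeOn (rng n) k T ∧ c * (n - 1).choose k ≤ fillVolAvg n k T := by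
  have hrng : #(rng n) = n := by simp [rng]
  have hcard : #(simplices (rng n) k) = n.choose (k + 1) := by
    rw [simplices_eq_powersetCard, card_powersetCard, hrng]
  obtain ⟨T, hT, hET⟩ := hE.isHypertreeLaw.exists_le_apply (finite_setOf_isHypertreeOn _ _)
    (∑ σ ∈ simplices (rng n) k, fillVol (bd {σ}))
  refine ⟨T, hT, (le_div_iff₀ (by exact_mod_cast Nat.choose_pos hn)).mpr ?_⟩
  calc c * (n - 1).choose k * n.choose (k + 1)
      = ∑ _σ ∈ simplices (rng n) k, c * (n - 1).choose k := by
        rw [sum_const, hcard, nsmul_eq_mul, mul_comm]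
    _ ≤ E (∑ σ ∈ simplices (rng n) k, fillVol (bd {σ})) := by
        rw [map_sum]
        refine sum_le_sum fun σ hσ => ?_
        rw [simplices_eq_powersetCard] at hσ
        obtain ⟨v, hv⟩ := card_pos.mp (k.succ_pos.trans_eq (mem_powersetCard.mp hσ).2.symm)
        have hne : (bd {σ}).Nonempty := by
          rw [bd_singleton]
          exact ⟨_, mem_image_of_mem _ hv⟩
        simpa [hrng] using hE.le_fillVol _ (isCycleOn_bd (singleton_subset_iff.mpr hσ)) hne
    _ ≤ (∑ σ ∈ simplices (rng n) k, fillVol (bd {σ})) T := hET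
    _ = ∑ σ ∈ simplices (rng n) k, (#(fill (bd {σ}) T) : ℝ) := Finset.sum_apply _ _ _

theorem exists_hypertree_large_avg_fill_general (d n : ℕ) (hd : 1 ≤ d) (hn : d + 1 ≤ n) :
    ∃ T, IsHypertreeOn (rng n) d T ∧
      (16 : ℝ) * (48 : ℝ) ^ (-(2 ^ (d - 1) : ℤ)) * ((n - 1).choose d : ℝ) ≤
        fillVolAvg n d T := by
  obtain ⟨k, rfl⟩ := Nat.exists_eq_add_of_le' hd
  obtain ⟨E, hE⟩ := exists_isSpreadFillingLaw k (rng n)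
  simpa [zpow_neg, ← zpow_natCast] using hE.exists_mul_choose_le_fillVolAvg hn

end ExpectationMethod

/-- For every `d ≥ 1` and `n ≥ d+1`, there is a `d`-hypertree `T` on `[n]` with average
filling-volume `μ(T) ≥ c_d·C(n-1,d)`, where `c_d = 16·48^{-3^{d-1}}`. -/
theorem exists_hypertree_large_avg_fill (d n : ℕ) (hd : 1 ≤ d) (hn : d + 1 ≤ n) :
    ∃ T, IsHypertreeOn (rng n) d T ∧
      (16 : ℝ) * (48 : ℝ) ^ (-(3 ^ (d - 1) : ℤ)) * ((n - 1).choose d : ℝ) ≤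
        fillVolAvg n d T := by
  obtain ⟨T, hT, hfill⟩ := exists_hypertree_large_avg_fill_general d n hd hn
  refine ⟨T, hT, le_trans ?_ hfill⟩
  gcongr <;> norm_num
end

section
/- For any two positive integers d and n, with α = 1 − 1/d and m = ⌈αn⌉, one has C(m,d) ≥ α^d·C(n-1,d) and C(m-1,d-1) ≥ α^{d-1}·C(n-2,d-1). -/
open Finset symmDiff

/-!
Since `k! * C(a, k) = a (a - 1) ⋯ (a - k + 1)`, it suffices to compare the falling factorials
factor by factor. With `α n ≤ m`, the inequality `α (n - 1 - i) ≤ m - i` between the `i`-th factors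
follows from `(i + 1) (1 - α) ≤ 1`, which for `α = 1 - 1/d` holds as long as `i < d`. Lowering both
upper and lower indices by `j` only discards the first `j` factors.
-/

section FactorwiseComparison

variable {R : Type*} {a b k : ℕ}

lemma pow_mul_descFactorial_le_descFactorial [CommSemiring R] [PartialOrder R] [IsOrderedRing R]
    {α : R} (hα : 0 ≤ α) (h : ∀ i < k, α * ((b - i : ℕ) : R) ≤ ((a - i : ℕ) : R)) :
    α ^ k * (b.descFactorial k : R) ≤ (a.descFactorial k : R) := by
  calc α ^ k * (b.descFactorial k : R)
      = ∏ i ∈ range k, α * ((b - i : ℕ) : R) := by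
        rw [Nat.descFactorial_eq_prod_range, Nat.cast_prod, prod_mul_distrib, prod_const,
          card_range]
    _ ≤ ∏ i ∈ range k, ((a - i : ℕ) : R) :=
        prod_le_prod (fun _ _ => mul_nonneg hα (Nat.cast_nonneg _))
          fun i hi => h i (mem_range.mp hi)
    _ = (a.descFactorial k : R) := by rw [Nat.descFactorial_eq_prod_range, Nat.cast_prod]

lemma pow_mul_choose_le_choose [CommSemiring R] [LinearOrder R] [IsStrictOrderedRing R]
    {α : R} (hα : 0 ≤ α) (h : ∀ i < k, α * ((b - i : ℕ) : R) ≤ ((a - i : ℕ) : R)) :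
    α ^ k * (b.choose k : R) ≤ (a.choose k : R) := by
  have hk : (0 : R) < (k.factorial : R) := Nat.cast_pos.mpr k.factorial_pos
  have hdesc := pow_mul_descFactorial_le_descFactorial hα h
  rw [Nat.descFactorial_eq_factorial_mul_choose, Nat.descFactorial_eq_factorial_mul_choose,
    Nat.cast_mul, Nat.cast_mul, mul_left_comm] at hdesc
  exact le_of_mul_le_mul_left hdesc hk

end FactorwiseComparison

section CeilBounds

variable {R : Type*} [CommRing R] [LinearOrder R] {α : R} {d m n : ℕ}

lemma natCast_mul_one_sub_le_one_of_le [IsOrderedRing R] {i : ℕ} (hi : i ≤ d)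
    (hd : (d : R) * (1 - α) ≤ 1) : (i : R) * (1 - α) ≤ 1 := by
  rcases le_total α 1 with hα | hα
  · exact (mul_le_mul_of_nonneg_right (Nat.mono_cast hi) (sub_nonneg.mpr hα)).trans hd
  · exact (mul_nonpos_of_nonneg_of_nonpos i.cast_nonneg (sub_nonpos.mpr hα)).trans zero_le_one

variable [IsStrictOrderedRing R]

lemma mul_natCast_sub_le_natCast_sub {i : ℕ} (hm : α * ((n + 1 : ℕ) : R) ≤ m)
    (hi : ((i + 1 : ℕ) : R) * (1 - α) ≤ 1) :
    α * ((n - i : ℕ) : R) ≤ ((m - i : ℕ) : R) := by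
  rcases le_total n i with hni | hin
  · simp [Nat.sub_eq_zero_of_le hni]
  · have hmi : (m : R) - i ≤ ((m - i : ℕ) : R) := by
      rw [sub_le_iff_le_add]
      exact_mod_cast le_tsub_add
    push_cast [Nat.cast_sub hin] at hm hi ⊢
    linarith

/-- Here `n` is the `n - 1` of `binomial_ceil_bounds`. -/
theorem binomial_ceil_bounds_general (hm : α * ((n + 1 : ℕ) : R) ≤ m)
    (hd : (d : R) * (1 - α) ≤ 1) (j : ℕ) :
    α ^ (d - j) * ((n - j).choose (d - j) : R) ≤ ((m - j).choose (d - j) : R) := by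
  rcases d.eq_zero_or_pos with rfl | hd_pos
  · simp
  · have hα : 0 ≤ α := by simpa using natCast_mul_one_sub_le_one_of_le hd_pos hd
    refine pow_mul_choose_le_choose hα fun i hi => ?_
    rw [Nat.sub_sub, Nat.sub_sub]
    exact mul_natCast_sub_le_natCast_sub hm (natCast_mul_one_sub_le_one_of_le (by lia) hd)

end CeilBounds

/-- For positive integers `d`, `n`, with `α = 1 − 1/d` and `m = ⌈αn⌉`, one has
`C(m,d) ≥ α^d·C(n-1,d)` and `C(m-1,d-1) ≥ α^{d-1}·C(n-2,d-1)`. -/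
theorem binomial_ceil_bounds (d n : ℕ) (hd : 0 < d) (hn : 0 < n) :
    (1 - 1 / (d : ℝ)) ^ d * ((n - 1).choose d : ℝ) ≤
        ((⌈(1 - 1 / (d : ℝ)) * n⌉₊).choose d : ℝ) ∧
      (1 - 1 / (d : ℝ)) ^ (d - 1) * ((n - 2).choose (d - 1) : ℝ) ≤
        (((⌈(1 - 1 / (d : ℝ)) * n⌉₊ - 1).choose (d - 1)) : ℝ) := by
  obtain ⟨n, rfl⟩ := Nat.exists_eq_add_one_of_ne_zero hn.ne'
  have hα : (d : ℝ) * (1 - (1 - 1 / (d : ℝ))) ≤ 1 := by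
    simpa only [sub_sub_cancel, one_div] using mul_inv_le_one
  have bound := binomial_ceil_bounds_general (n := n) (Nat.le_ceil _) hα
  exact ⟨bound 0, bound 1⟩
end
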